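/- For the exponential random graph model with parameter β in the subcritical region, the normalized number of edges W_n = (Σ_{s∈I} Y_s − μ_n)/σ_n converges in distribution, as n → ∞, to a standard normal random variable. -/

import Mathlib

open MeasureTheory ProbabilityTheory Real Finset

noncomputable section

/-- The index set `I = {(i,j) : 1 ≤ i < j ≤ n}` of potential edges on `n` labeled vertices. -/
def EdgeIdx (n : ℕ) : Type := {p : Fin n × Fin n // p.1 < p.2}

instance (n : ℕ) : Fintype (EdgeIdx n) := by unfold EdgeIdx; infer_instance
instance (n : ℕ) : DecidableEq (EdgeIdx n) := by unfold EdgeIdx; infer_instance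

/-- Adjacency of the graph `G_y` encoded by the edge-indicator vector `y`. -/
def yAdj {n : ℕ} (y : EdgeIdx n → Bool) (a b : Fin n) : Bool :=
  if h : a < b then y ⟨(a, b), h⟩ else if h' : b < a then y ⟨(b, a), h'⟩ else false

/-- The number of edges of a graph `H`. -/
def eCount {V : Type} [Fintype V] (H : SimpleGraph V) : ℕ :=
  Nat.card H.edgeSet

/-- `|Hom(H, G_y)|`: the number of injective maps from the vertex set of `H` to `Fin n`
mapping every edge of `H` to an edge of `G_y`. -/
def homCount {V : Type} [Fintype V] {n : ℕ} (H : SimpleGraph V) (y : EdgeIdx n → Bool) : ℕ :=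
  Nat.card {φ : V → Fin n //
    Function.Injective φ ∧ ∀ a b, H.Adj a b → yAdj y (φ a) (φ b) = true}

/-- `|Hom(H, G_y, s)|`: the number of pairs `(φ, (u, v))` where `φ` is injective, `(u, v)` is
an ordered pair of adjacent vertices of `H` with `{φ u, φ v} = s`, and every edge of `H` other
than `{u, v}` is mapped by `φ` to an edge of `G_y` (regardless of whether the edge `s` is
present in `G_y`). -/
def homCountAt {V : Type} [Fintype V] {n : ℕ} (H : SimpleGraph V) (y : EdgeIdx n → Bool)
    (s : EdgeIdx n) : ℕ :=
  Nat.card {t : (V → Fin n) × V × V //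
    Function.Injective t.1 ∧ H.Adj t.2.1 t.2.2 ∧
    Sym2.mk (t.1 t.2.1, t.1 t.2.2) = Sym2.mk (s.1.1, s.1.2) ∧
    ∀ a b, H.Adj a b → Sym2.mk (a, b) ≠ Sym2.mk (t.2.1, t.2.2) →
      yAdj y (t.1 a) (t.1 b) = true}

section ERGM

variable {k : ℕ} (β : Fin (k + 1) → ℝ) (v : Fin (k + 1) → ℕ)
  (H : ∀ j : Fin (k + 1), SimpleGraph (Fin (v j)))

/-- The (unnormalized) ERGM weight `exp (Σ_j β_j n^{2−v_j} |Hom(H_j, G_y)|)`. -/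
def ergmWeight (n : ℕ) (y : EdgeIdx n → Bool) : ℝ :=
  Real.exp (∑ j, β j * (n : ℝ) ^ ((2 : ℤ) - (v j : ℤ)) * (homCount (H j) y : ℝ))

/-- The ERGM normalizing constant. -/
def ergmZ (n : ℕ) : ℝ := ∑ y : EdgeIdx n → Bool, ergmWeight β v H n y

/-- The ERGM probability of the configuration `y`. -/
def ergmProb (n : ℕ) (y : EdgeIdx n → Bool) : ℝ := ergmWeight β v H n y / ergmZ β v H n

/-- Expectation of `G(Y)` under the ERGM. -/
def ergmExp (n : ℕ) (G : (EdgeIdx n → Bool) → ℝ) : ℝ :=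
  ∑ y : EdgeIdx n → Bool, ergmProb β v H n y * G y

/-- Variance of `G(Y)` under the ERGM. -/
def ergmVar (n : ℕ) (G : (EdgeIdx n → Bool) → ℝ) : ℝ :=
  ergmExp β v H n (fun y => (G y - ergmExp β v H n G) ^ 2)

/-- The total number of edges of `G_y`. -/
def edgeSum {n : ℕ} (y : EdgeIdx n → Bool) : ℝ :=
  ∑ s : EdgeIdx n, (if y s then (1 : ℝ) else 0)

/-- `Φ_β(a) = Σ_j β_j e_j a^{e_j − 1}`. -/
def PhiFn : ℝ → ℝ := fun a =>
  ∑ j, β j * (eCount (H j) : ℝ) * a ^ (eCount (H j) - 1)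

/-- `φ_β(a) = e^{2Φ_β(a)} / (e^{2Φ_β(a)} + 1)`. -/
def phiFn : ℝ → ℝ := fun a =>
  Real.exp (2 * PhiFn β v H a) / (Real.exp (2 * PhiFn β v H a) + 1)

/-- `σ_n² = N p (1−p) / (1 − 2 p (1−p) Φ_β'(p))` with `N = n(n−1)/2`. -/
def sigmaSq (p : ℝ) (n : ℕ) : ℝ :=
  ((n : ℝ) * ((n : ℝ) - 1) / 2) * p * (1 - p) /
    (1 - 2 * p * (1 - p) * deriv (PhiFn β v H) p)

/-- `μ_n = E Σ_{s ∈ I} Y_s`. -/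
def muN (n : ℕ) : ℝ := ergmExp β v H n (edgeSum)

/-- The standardized number of edges `W_n`. -/
def Wn (p : ℝ) (n : ℕ) (y : EdgeIdx n → Bool) : ℝ :=
  (edgeSum y - muN β v H n) / Real.sqrt (sigmaSq β v H p n)

end ERGM

section Configurations

/-- The monomial `∏_{t ∈ T} y_t` on Boolean configurations. -/
def mon {I : Type} (T : Finset I) (y : I → Bool) : ℝ := ∏ t ∈ T, (if y t then (1 : ℝ) else 0)

lemma mon_empty {I : Type} (y : I → Bool) : mon ∅ y = 1 := by simp [mon]

lemma mon_eq_ite {I : Type} (T : Finset I) (y : I → Bool) [Decidable (∀ t ∈ T, y t = true)] :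
    mon T y = if ∀ t ∈ T, y t = true then 1 else 0 := by
  unfold mon
  split_ifs with h
  · exact Finset.prod_eq_one fun t ht => by simp [h t ht]
  · push Not at h
    obtain ⟨t, ht, h'⟩ := h
    exact Finset.prod_eq_zero ht (by simp [h'])

lemma mon_nonneg {I : Type} (T : Finset I) (y : I → Bool) : 0 ≤ mon T y :=
  Finset.prod_nonneg fun t _ => by split_ifs <;> norm_num

lemma mon_le_one {I : Type} (T : Finset I) (y : I → Bool) : mon T y ≤ 1 :=
  Finset.prod_le_one (fun t _ => by split_ifs <;> norm_num)
    fun t _ => by split_ifs <;> norm_num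

lemma mon_monotone {I : Type} (T : Finset I) : Monotone (mon T) := by
  intro y z h
  refine Finset.prod_le_prod (fun t _ => by split_ifs <;> norm_num) fun t _ => ?_
  have h' : y t = true → z t = true := fun h1 => by
    have := h t
    rw [h1] at this
    exact Bool.eq_true_of_true_le this
  split_ifs with h1 h2 h2
  · rfl
  · exact absurd (h' h1) h2
  · norm_num
  · rfl

variable {I A : Type} [DecidableEq I]

lemma mon_update_of_notMem {T : Finset I} {s : I} (hs : s ∉ T) (y : I → Bool) (b : Bool) :
    mon T (Function.update y s b) = mon T y := by
  refine Finset.prod_congr rfl fun t ht => ?_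
  have hts : t ≠ s := fun h => hs (h ▸ ht)
  rw [Function.update_of_ne hts]

lemma mon_update_true (T : Finset I) (s : I) (y : I → Bool) :
    mon T (Function.update y s true) = mon (T.erase s) y := by
  by_cases hs : s ∈ T
  · rw [← mon_update_of_notMem (Finset.notMem_erase s T) y true]
    unfold mon
    rw [← Finset.mul_prod_erase T _ hs]
    simp
  · rw [Finset.erase_eq_of_notMem hs, mon_update_of_notMem hs]

lemma mon_update_false {T : Finset I} {s : I} (hs : s ∈ T) (y : I → Bool) :
    mon T (Function.update y s false) = 0 :=
  Finset.prod_eq_zero hs (by simp)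

lemma mon_update_sub (T : Finset I) (s : I) (y : I → Bool) :
    mon T (Function.update y s true) - mon T (Function.update y s false) =
      if s ∈ T then mon (T.erase s) y else 0 := by
  split_ifs with h
  · rw [mon_update_true, mon_update_false h, sub_zero]
  · rw [mon_update_of_notMem h, mon_update_of_notMem h, sub_self]

lemma update_false_le_update_true (y : I → Bool) (s : I) :
    Function.update y s false ≤ Function.update y s true := by
  intro t
  by_cases h : t = s
  · subst h; simp
  · simp [Function.update_of_ne h]

/-- A function on an order-convex set of configurations that increases under adding a single
coordinate inside the set is monotone on the set. -/
lemma monotoneOn_of_update [Fintype I] {K : Set (I → Bool)} (hK : K.OrdConnected)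
    {g : (I → Bool) → ℝ}
    (hg : ∀ y s, Function.update y s false ∈ K → Function.update y s true ∈ K →
      g (Function.update y s false) ≤ g (Function.update y s true)) : MonotoneOn g K := by
  suffices H : ∀ m : ℕ, ∀ y z : I → Bool, y ∈ K → z ∈ K → y ≤ z →
      (univ.filter fun t => y t ≠ z t).card = m → g y ≤ g z from
    fun y hy z hz h => H _ y z hy hz h rfl
  intro m
  induction m with
  | zero =>
    intro y z _ _ _ hm
    have : y = z := by
      funext t
      by_contra h
      have : t ∈ univ.filter fun t => y t ≠ z t := by simp [h]
      rw [Finset.card_eq_zero.1 hm] at this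
      simp at this
    rw [this]
  | succ m ih =>
    intro y z hy hz hyz hm
    obtain ⟨t, ht⟩ : (univ.filter fun t => y t ≠ z t).Nonempty := by
      rw [← Finset.card_pos]; omega
    have hne : y t ≠ z t := by simpa using ht
    have hyt : y t = false := by
      have := hyz t
      revert this hne
      cases y t <;> cases z t <;> simp
    have hzt : z t = true := by
      cases h2 : z t <;> simp_all
    have hw0 : Function.update y t false = y := by rw [← hyt, Function.update_eq_self]
    have hyw : y ≤ Function.update y t true := by
      conv_lhs => rw [← hw0]
      exact update_false_le_update_true y t
    have hwz : Function.update y t true ≤ z := by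
      intro u
      by_cases h : u = t
      · subst h; simp [hzt]
      · simpa [Function.update_of_ne h] using hyz u
    have hw : Function.update y t true ∈ K := hK.out hy hz ⟨hyw, hwz⟩
    have h1 := hg y t (by rwa [hw0]) hw
    rw [hw0] at h1
    refine h1.trans (ih _ z hw hz hwz ?_)
    have : (univ.filter fun u => Function.update y t true u ≠ z u) =
        (univ.filter fun u => y u ≠ z u).erase t := by
      ext u
      by_cases h : u = t
      · subst h; simp [hzt]
      · simp [h]
    rw [this, Finset.card_erase_of_mem ht, hm]
    rfl

lemma sum_update_add_update [Fintype I] (s : I) (F : (I → Bool) → ℝ) :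
    ∑ y, (F (Function.update y s true) + F (Function.update y s false)) = 2 * ∑ y, F y := by
  have hinv : Function.Involutive fun y : I → Bool => Function.update y s (!y s) := by
    intro y
    funext t
    by_cases h : t = s
    · subst h; simp
    · simp [Function.update_of_ne h]
  have h1 : ∑ y, F (Function.update y s (!y s)) = ∑ y, F y :=
    Equiv.sum_comp hinv.toPerm F
  rw [two_mul]
  nth_rewrite 2 [← h1]
  rw [← Finset.sum_add_distrib]
  refine Finset.sum_congr rfl fun y _ => ?_
  cases h : y s
  · have : Function.update y s false = y := by rw [← h, Function.update_eq_self]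
    rw [this, Bool.not_false, add_comm]
  · have : Function.update y s true = y := by rw [← h, Function.update_eq_self]
    rw [this, Bool.not_true]

end Configurations

section Gibbs

variable {I A : Type} [DecidableEq I] [Fintype A]

/-- The multilinear Hamiltonian `∑_α w_α ∏_{t ∈ S_α} y_t`. -/
def ham (w : A → ℝ) (S : A → Finset I) (y : I → Bool) : ℝ := ∑ α, w α * mon (S α) y

/-- The discrete derivative of the Hamiltonian in the coordinate `s`. -/
def locField (w : A → ℝ) (S : A → Finset I) (s : I) (y : I → Bool) : ℝ :=
  ∑ α, if s ∈ S α then w α * mon ((S α).erase s) y else 0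

/-- The sum over `s ≠ t` of the second discrete derivatives of the Hamiltonian. -/
def pairField (w : A → ℝ) (S : A → Finset I) (t : I) (y : I → Bool) : ℝ :=
  ∑ α, if t ∈ S α then w α * ∑ s ∈ (S α).erase t, mon (((S α).erase t).erase s) y else 0

/-- The coupling constant between `s` and `t`. -/
def coupling (w : A → ℝ) (S : A → Finset I) (s t : I) : ℝ :=
  ∑ α, if s ∈ S α ∧ t ∈ (S α).erase s then w α else 0

/-- Nonnegative weights on all monomials of degree at least two. -/
def Ferro (w : A → ℝ) (S : A → Finset I) : Prop := ∀ α, 0 ≤ w α ∨ ∃ s, S α = {s}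

lemma ham_update (w : A → ℝ) (S : A → Finset I) (s : I) (y : I → Bool) :
    ham w S (Function.update y s true) =
      ham w S (Function.update y s false) + locField w S s y := by
  unfold ham locField
  rw [← sub_eq_iff_eq_add', ← Finset.sum_sub_distrib]
  refine Finset.sum_congr rfl fun α _ => ?_
  rw [← mul_sub, mon_update_sub]
  split_ifs <;> simp

lemma locField_update_self (w : A → ℝ) (S : A → Finset I) (s : I) (y : I → Bool) (b : Bool) :
    locField w S s (Function.update y s b) = locField w S s y := by
  unfold locField
  refine Finset.sum_congr rfl fun α _ => ?_
  rw [mon_update_of_notMem (Finset.notMem_erase _ _)]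

lemma locField_monotone {w : A → ℝ} {S : A → Finset I} (hw : Ferro w S) (s : I) :
    Monotone (locField w S s) := by
  intro y z h
  refine Finset.sum_le_sum fun α _ => ?_
  split_ifs with hs
  · rcases hw α with h0 | ⟨u, hu⟩
    · exact mul_le_mul_of_nonneg_left (mon_monotone _ h) h0
    · rw [hu, Finset.mem_singleton] at hs
      simp [hu, hs, mon_empty]
  · rfl

lemma pairField_monotone {w : A → ℝ} {S : A → Finset I} (hw : Ferro w S) (t : I) :
    Monotone (pairField w S t) := by
  intro y z h
  refine Finset.sum_le_sum fun α _ => ?_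
  split_ifs with hs
  · rcases hw α with h0 | ⟨u, hu⟩
    · exact mul_le_mul_of_nonneg_left (Finset.sum_le_sum fun s _ => mon_monotone _ h) h0
    · rw [hu, Finset.mem_singleton] at hs
      simp [hu, hs]
  · rfl

/-- The increments of the local fields in direction `t`. -/
lemma locField_update_sub (w : A → ℝ) (S : A → Finset I) (s t : I) (y : I → Bool) :
    locField w S s (Function.update y t true) - locField w S s (Function.update y t false) =
      ∑ α, if s ∈ S α ∧ t ∈ (S α).erase s then w α * mon (((S α).erase s).erase t) y else 0 := by
  unfold locField
  rw [← Finset.sum_sub_distrib]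
  refine Finset.sum_congr rfl fun α _ => ?_
  by_cases hs : s ∈ S α
  · simp only [hs, if_true, true_and]
    rw [← mul_sub, mon_update_sub]
    split_ifs <;> simp
  · simp [hs]

lemma sum_locField_update_sub [Fintype I] (w : A → ℝ) (S : A → Finset I) (t : I)
    (y : I → Bool) :
    ∑ s, (locField w S s (Function.update y t true) -
      locField w S s (Function.update y t false)) = pairField w S t y := by
  simp_rw [locField_update_sub]
  rw [Finset.sum_comm]
  refine Finset.sum_congr rfl fun α _ => ?_
  split_ifs with ht
  · rw [Finset.mul_sum, ← Finset.sum_filter]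
    refine Finset.sum_congr ?_ fun s _ => by rw [Finset.erase_right_comm]
    ext s
    simp only [mem_filter, mem_univ, true_and, mem_erase]
    tauto
  · refine Finset.sum_eq_zero fun s _ => if_neg fun h => ht (Finset.mem_of_mem_erase h.2)

lemma coupling_nonneg {w : A → ℝ} {S : A → Finset I} (hw : Ferro w S) (s t : I) :
    0 ≤ coupling w S s t := by
  refine Finset.sum_nonneg fun α _ => ?_
  split_ifs with h
  · rcases hw α with h0 | ⟨u, hu⟩
    · exact h0
    · rw [hu, Finset.mem_singleton] at h
      simp [h.1] at h
  · rfl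

lemma abs_locField_update_sub_le {w : A → ℝ} {S : A → Finset I} (hw : Ferro w S) (s t : I)
    (y : I → Bool) :
    |locField w S s (Function.update y t true) - locField w S s (Function.update y t false)| ≤
      coupling w S s t := by
  rw [locField_update_sub]
  refine (Finset.abs_sum_le_sum_abs _ _).trans (Finset.sum_le_sum fun α _ => ?_)
  split_ifs with h
  · rcases hw α with h0 | ⟨u, hu⟩
    · rw [abs_of_nonneg (mul_nonneg h0 (mon_nonneg _ _))]
      exact mul_le_of_le_one_right h0 (mon_le_one _ _)
    · rw [hu, Finset.mem_singleton] at h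
      simp [h.1] at h
  · simp

lemma abs_pairField_update_sub_le {w : A → ℝ} {S : A → Finset I} (hw : Ferro w S) {D : ℕ}
    (hD : ∀ α, (S α).card ≤ D) (s t : I) (y : I → Bool) :
    |pairField w S s (Function.update y t true) - pairField w S s (Function.update y t false)| ≤
      D * coupling w S s t := by
  unfold pairField coupling
  rw [← Finset.sum_sub_distrib, Finset.mul_sum]
  refine (Finset.abs_sum_le_sum_abs _ _).trans (Finset.sum_le_sum fun α _ => ?_)
  by_cases hs : s ∈ S α
  swap
  · simp [hs]
  simp only [hs, if_true, true_and]
  rw [← mul_sub, ← Finset.sum_sub_distrib]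
  simp_rw [mon_update_sub]
  by_cases ht : t ∈ (S α).erase s
  swap
  · have : ∀ u, t ∉ ((S α).erase s).erase u := fun u h => ht (Finset.mem_of_mem_erase h)
    simp [this, ht]
  rw [if_pos ht]
  rcases hw α with h0 | ⟨u, hu⟩
  swap
  · rw [hu, Finset.mem_singleton] at hs
    simp [hu, hs] at ht
  rw [abs_mul, abs_of_nonneg h0, mul_comm]
  refine mul_le_mul_of_nonneg_right ?_ h0
  refine (Finset.abs_sum_le_sum_abs _ _).trans ?_
  have hc : (((S α).erase s).card : ℝ) ≤ D := by
    exact_mod_cast (Finset.card_le_card (Finset.erase_subset _ _)).trans (hD α)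
  refine le_trans ?_ hc
  rw [Finset.card_eq_sum_ones, Nat.cast_sum]
  refine Finset.sum_le_sum fun u _ => ?_
  split_ifs
  · rw [abs_of_nonneg (mon_nonneg _ _)]
    simpa using mon_le_one _ _
  · simp

/-- The total coupling at a site, expressed through the degrees of the monomials. -/
lemma sum_coupling [Fintype I] (w : A → ℝ) (S : A → Finset I) (s : I) :
    ∑ t, coupling w S s t = ∑ α, if s ∈ S α then w α * ((S α).card - 1 : ℝ) else 0 := by
  unfold coupling
  rw [Finset.sum_comm]
  refine Finset.sum_congr rfl fun α _ => ?_
  split_ifs with hs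
  · simp only [hs, true_and]
    rw [← Finset.sum_filter, Finset.sum_const, nsmul_eq_mul, mul_comm]
    congr 1
    rw [Finset.filter_mem_eq_inter, Finset.univ_inter, Finset.card_erase_of_mem hs,
      Nat.cast_sub (Finset.card_pos.2 ⟨s, hs⟩), Nat.cast_one]
  · simp [hs]

variable [Fintype I]

/-- The Gibbs distribution with Hamiltonian `ham w S`. -/
def gibbs (w : A → ℝ) (S : A → Finset I) (y : I → Bool) : ℝ :=
  Real.exp (ham w S y) / ∑ z, Real.exp (ham w S z)

lemma gibbs_pos (w : A → ℝ) (S : A → Finset I) (y : I → Bool) : 0 < gibbs w S y :=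
  div_pos (Real.exp_pos _) (Finset.sum_pos (fun _ _ => Real.exp_pos _) ⟨y, Finset.mem_univ y⟩)

lemma sum_gibbs (w : A → ℝ) (S : A → Finset I) : ∑ y, gibbs w S y = 1 := by
  unfold gibbs
  rw [← Finset.sum_div]
  exact div_self (Finset.sum_pos (fun _ _ => Real.exp_pos _)
    ⟨fun _ => true, Finset.mem_univ _⟩).ne'

/-- Expectation with respect to the Gibbs distribution. -/
def avg (w : A → ℝ) (S : A → Finset I) (F : (I → Bool) → ℝ) : ℝ := ∑ y, gibbs w S y * F y

variable (w : A → ℝ) (S : A → Finset I)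

lemma avg_const (c : ℝ) : avg w S (fun _ => c) = c := by
  unfold avg
  rw [← Finset.sum_mul, sum_gibbs, one_mul]

lemma avg_add (F G : (I → Bool) → ℝ) :
    avg w S (fun y => F y + G y) = avg w S F + avg w S G := by
  simp [avg, mul_add, Finset.sum_add_distrib]

lemma avg_sub (F G : (I → Bool) → ℝ) :
    avg w S (fun y => F y - G y) = avg w S F - avg w S G := by
  simp [avg, mul_sub, Finset.sum_sub_distrib]

lemma avg_const_mul (c : ℝ) (F : (I → Bool) → ℝ) :
    avg w S (fun y => c * F y) = c * avg w S F := by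
  simp only [avg, Finset.mul_sum]
  exact Finset.sum_congr rfl fun y _ => by ring

lemma avg_sum {J : Type} (T : Finset J) (F : J → (I → Bool) → ℝ) :
    avg w S (fun y => ∑ j ∈ T, F j y) = ∑ j ∈ T, avg w S (F j) := by
  simp only [avg, Finset.mul_sum]
  exact Finset.sum_comm

lemma avg_mono {F G : (I → Bool) → ℝ} (h : ∀ y, F y ≤ G y) : avg w S F ≤ avg w S G :=
  Finset.sum_le_sum fun y _ => mul_le_mul_of_nonneg_left (h y) (gibbs_pos w S y).le

lemma abs_avg_le {F G : (I → Bool) → ℝ} (h : ∀ y, |F y| ≤ G y) : |avg w S F| ≤ avg w S G := by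
  refine (Finset.abs_sum_le_sum_abs _ _).trans (Finset.sum_le_sum fun y _ => ?_)
  rw [abs_mul, abs_of_pos (gibbs_pos w S y)]
  exact mul_le_mul_of_nonneg_left (h y) (gibbs_pos w S y).le

lemma gibbs_update_true (s : I) (y : I → Bool) :
    gibbs w S (Function.update y s true) = Real.sigmoid (locField w S s y) *
      (gibbs w S (Function.update y s true) + gibbs w S (Function.update y s false)) := by
  unfold gibbs
  rw [ham_update, Real.exp_add, Real.sigmoid_def, Real.exp_neg]
  have := Real.exp_pos (locField w S s y)
  field_simp

/-- Invariance of the Gibbs distribution under resampling the coordinate `s`. -/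
lemma avg_resample (s : I) (F : (I → Bool) → ℝ) :
    avg w S F = avg w S (fun y => Real.sigmoid (locField w S s y) * F (Function.update y s true) +
      (1 - Real.sigmoid (locField w S s y)) * F (Function.update y s false)) := by
  have h2 : (2 : ℝ) ≠ 0 := two_ne_zero
  refine mul_left_cancel₀ h2 ?_
  unfold avg
  rw [← sum_update_add_update s, ← sum_update_add_update s]
  refine Finset.sum_congr rfl fun y _ => ?_
  simp only [locField_update_self, Function.update_idem]
  have h := gibbs_update_true w S s y
  set a := gibbs w S (Function.update y s true)
  set b := gibbs w S (Function.update y s false)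
  linear_combination (F (Function.update y s true) - F (Function.update y s false)) * h

/-- Integration by parts for the Gibbs distribution. -/
lemma avg_sub_sigmoid_mul (s : I) (G : (I → Bool) → ℝ) :
    avg w S (fun y => ((if y s then (1 : ℝ) else 0) - Real.sigmoid (locField w S s y)) * G y) =
      avg w S (fun y => Real.sigmoid (locField w S s y) * (1 - Real.sigmoid (locField w S s y)) *
        (G (Function.update y s true) - G (Function.update y s false))) := by
  rw [avg_resample w S s]
  congr 1
  funext y
  simp only [locField_update_self, Function.update_self, if_true]
  simp
  ring

/-- The FKG inequality for ferromagnetic Gibbs distributions. -/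
lemma avg_mul_avg_le {w : A → ℝ} {S : A → Finset I} (hw : Ferro w S) {F G : (I → Bool) → ℝ}
    (hF : Monotone F) (hG : Monotone G) :
    avg w S F * avg w S G ≤ avg w S (fun y => F y * G y) := by
  have hbot : ∀ H : (I → Bool) → ℝ, Monotone H → 0 ≤ fun y => H y - H ⊥ := fun H hH y => by
    simpa using hH (bot_le : ⊥ ≤ y)
  have hlat : ∀ a b, gibbs w S a * gibbs w S b ≤ gibbs w S (a ⊓ b) * gibbs w S (a ⊔ b) := by
    intro a b
    unfold gibbs
    rw [div_mul_div_comm, div_mul_div_comm, ← Real.exp_add, ← Real.exp_add]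
    refine div_le_div_of_nonneg_right (Real.exp_le_exp.2 ?_) (by positivity)
    unfold ham
    rw [← Finset.sum_add_distrib, ← Finset.sum_add_distrib]
    refine Finset.sum_le_sum fun α _ => ?_
    rcases hw α with h0 | ⟨u, hu⟩
    · rw [← mul_add, ← mul_add]
      refine mul_le_mul_of_nonneg_left ?_ h0
      classical
      by_cases ha : ∀ t ∈ S α, a t = true
      · have : mon (S α) (a ⊓ b) = mon (S α) b := Finset.prod_congr rfl fun t ht => by
          simp [ha t ht]
        rw [this, add_comm]
        exact add_le_add_right (mon_monotone _ le_sup_left) _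
      · have : mon (S α) a = 0 := by rw [mon_eq_ite, if_neg ha]
        rw [this, zero_add]
        exact (mon_monotone _ (le_sup_right : b ≤ a ⊔ b)).trans
          (le_add_of_nonneg_left (mon_nonneg _ _))
    · rw [hu]
      simp only [mon, Finset.prod_singleton, Pi.inf_apply, Pi.sup_apply]
      rcases Bool.eq_false_or_eq_true (a u) with h1 | h1 <;>
        rcases Bool.eq_false_or_eq_true (b u) with h2 | h2 <;> simp [h1, h2]
  have key := fkg _ _ _ (fun y => (gibbs_pos w S y).le) (hbot F hF) (hbot G hG)
    (fun y z h => sub_le_sub_right (hF h) _) (fun y z h => sub_le_sub_right (hG h) _) hlat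
  rw [sum_gibbs, one_mul] at key
  change avg w S (fun y => F y - F ⊥) * avg w S (fun y => G y - G ⊥) ≤
    avg w S (fun y => (F y - F ⊥) * (G y - G ⊥)) at key
  have e : (fun y => (F y - F ⊥) * (G y - G ⊥)) =
      fun y => (F y * G y - F ⊥ * G y) - (G ⊥ * F y - F ⊥ * G ⊥) := by funext y; ring
  rw [e, avg_sub, avg_sub, avg_sub, avg_sub, avg_sub, avg_const_mul, avg_const_mul, avg_const,
    avg_const, avg_const] at key
  linarith

/-- Covariance with respect to the Gibbs distribution. -/
def cov (F G : (I → Bool) → ℝ) : ℝ := avg w S (fun y => F y * G y) - avg w S F * avg w S G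

lemma cov_sub_left (F₁ F₂ G : (I → Bool) → ℝ) :
    cov w S (fun y => F₁ y - F₂ y) G = cov w S F₁ G - cov w S F₂ G := by
  unfold cov
  have : (fun y => (F₁ y - F₂ y) * G y) = fun y => F₁ y * G y - F₂ y * G y := by
    funext y; ring
  rw [this, avg_sub, avg_sub]
  ring

lemma cov_const_mul_left (c : ℝ) (F G : (I → Bool) → ℝ) :
    cov w S (fun y => c * F y) G = c * cov w S F G := by
  unfold cov
  have : (fun y => c * F y * G y) = fun y => c * (F y * G y) := by
    funext y; ring
  rw [this, avg_const_mul, avg_const_mul]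
  ring

/-- The probability of the complement of `K`. -/
def probCompl (K : Set (I → Bool)) : ℝ := by
  classical exact avg w S (fun y => if y ∈ K then 0 else 1)

/-- Approximate FKG inequality for functions that are monotone on a set of large probability. -/
lemma neg_le_cov_of_monotoneOn {w : A → ℝ} {S : A → Finset I} (hw : Ferro w S)
    {K : Set (I → Bool)} {F G : (I → Bool) → ℝ} {R B : ℝ} (hF : MonotoneOn F K)
    (hR : ∀ y, |F y| ≤ R) (hG : Monotone G) (hB : ∀ y, |G y| ≤ B) :
    -(4 * R * B * probCompl w S K) ≤ cov w S F G := by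
  classical
  have hR0 : 0 ≤ R := (abs_nonneg _).trans (hR ⊥)
  have hB0 : 0 ≤ B := (abs_nonneg _).trans (hB ⊥)
  obtain ⟨F₂, hF₂, hE₂, hR₂⟩ : ∃ F₂ : (I → Bool) → ℝ, Monotone F₂ ∧ Set.EqOn F F₂ K ∧
      ∀ y, |F₂ y| ≤ R := by
    have hbdd : ∀ y, ∀ x ∈ insert (-R) (F '' (K ∩ Set.Iic y)), x ≤ R := by
      rintro y x (rfl | ⟨z, _, rfl⟩)
      · linarith
      · exact (abs_le.1 (hR z)).2
    refine ⟨fun y => sSup (insert (-R) (F '' (K ∩ Set.Iic y))), fun y z h => ?_, fun y hy => ?_,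
      fun y => abs_le.2 ⟨le_csSup ⟨R, hbdd y⟩ (Set.mem_insert _ _),
        csSup_le (Set.insert_nonempty _ _) (hbdd y)⟩⟩
    · refine csSup_le_csSup ⟨R, hbdd z⟩ (Set.insert_nonempty _ _) (Set.insert_subset_insert ?_)
      exact Set.image_mono (Set.inter_subset_inter_right _ (Set.Iic_subset_Iic.2 h))
    · suffices h : IsGreatest (insert (-R) (F '' (K ∩ Set.Iic y))) (F y) from h.csSup_eq.symm
      refine ⟨Or.inr ⟨y, ⟨hy, Set.mem_Iic.2 le_rfl⟩, rfl⟩, ?_⟩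
      rintro x (rfl | ⟨z, hz, rfl⟩)
      · exact (abs_le.1 (hR y)).1
      · exact hF hz.1 hy hz.2
  have hpos : 0 ≤ cov w S F₂ G := sub_nonneg.2 (avg_mul_avg_le hw hF₂ hG)
  have hdiff : ∀ y, |F y - F₂ y| ≤ 2 * R * (if y ∈ K then 0 else 1) := by
    intro y
    split_ifs with h
    · simp [hE₂ h]
    · have := abs_sub (F y) (F₂ y)
      linarith [hR y, hR₂ y]
  have h1 : |avg w S (fun y => F y - F₂ y)| ≤ 2 * R * probCompl w S K := by
    refine (abs_avg_le w S hdiff).trans_eq ?_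
    rw [avg_const_mul]
    rfl
  have h2 : |avg w S (fun y => (F y - F₂ y) * G y)| ≤ 2 * R * B * probCompl w S K := by
    refine (abs_avg_le w S (G := fun y => 2 * R * B * (if y ∈ K then 0 else 1))
      fun y => ?_).trans_eq ?_
    · rw [abs_mul]
      calc |F y - F₂ y| * |G y| ≤ (2 * R * (if y ∈ K then 0 else 1)) * B :=
            mul_le_mul (hdiff y) (hB y) (abs_nonneg _) ((abs_nonneg _).trans (hdiff y))
        _ = _ := by ring
    · rw [avg_const_mul]
      rfl
  have h3 : |avg w S G| ≤ B := by
    refine (abs_avg_le w S hB).trans_eq (avg_const w S B)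
  have h4 : cov w S F G - cov w S F₂ G =
      avg w S (fun y => (F y - F₂ y) * G y) - avg w S (fun y => F y - F₂ y) * avg w S G := by
    rw [← cov_sub_left]
    rfl
  have h5 : |avg w S (fun y => F y - F₂ y) * avg w S G| ≤ 2 * R * B * probCompl w S K := by
    rw [abs_mul]
    calc _ ≤ (2 * R * probCompl w S K) * B :=
          mul_le_mul h1 h3 (abs_nonneg _) ((abs_nonneg _).trans h1)
      _ = _ := by ring
  have := abs_le.1 h2
  have := abs_le.1 h5
  linarith

end Gibbs

section SteinIdentity

/-- The number of coordinates equal to `true`. -/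
def total {I : Type} [Fintype I] (y : I → Bool) : ℝ := ∑ s, if y s then (1 : ℝ) else 0

lemma total_update {I : Type} [Fintype I] [DecidableEq I] (y : I → Bool) (s : I) :
    total (Function.update y s true) = total (Function.update y s false) + 1 := by
  unfold total
  rw [← sub_eq_iff_eq_add', ← Finset.sum_sub_distrib, Finset.sum_eq_single s]
  · simp
  · intro t _ h
    simp [Function.update_of_ne h]
  · simp

lemma total_monotone {I : Type} [Fintype I] : Monotone (total : (I → Bool) → ℝ) := by
  intro y z h
  refine Finset.sum_le_sum fun s _ => ?_
  simpa [mon] using mon_monotone {s} h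

lemma abs_total_le {I : Type} [Fintype I] (y : I → Bool) : |total y| ≤ Fintype.card I := by
  refine (Finset.abs_sum_le_sum_abs _ _).trans ?_
  rw [Fintype.card, Finset.card_eq_sum_ones, Nat.cast_sum]
  refine Finset.sum_le_sum fun s _ => ?_
  split_ifs <;> simp

lemma abs_sigmoid_sub_le {a ε v δ : ℝ}
    (h : ∀ x ∈ Set.Icc (a - ε) (a + ε), |Real.sigmoid x * (1 - Real.sigmoid x) - v| ≤ δ)
    {x y : ℝ} (hx : x ∈ Set.Icc (a - ε) (a + ε)) (hy : y ∈ Set.Icc (a - ε) (a + ε))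
    (hxy : x ≤ y) :
    |Real.sigmoid y - Real.sigmoid x - v * (y - x)| ≤ δ * (y - x) := by
  have key := (convex_Icc (a - ε) (a + ε)).norm_image_sub_le_of_norm_hasDerivWithin_le
    (f := fun x => Real.sigmoid x - v * x)
    (f' := fun x => Real.sigmoid x * (1 - Real.sigmoid x) - v) (C := δ)
    (fun x _ => by
      have := (Real.hasDerivAt_sigmoid x).fun_sub ((hasDerivAt_id' x).const_mul v)
      simpa using this.hasDerivWithinAt) h hx hy
  rw [Real.norm_eq_abs, Real.norm_eq_abs, abs_of_nonneg (sub_nonneg.2 hxy)] at key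
  refine le_trans (le_of_eq ?_) key
  congr 1
  ring

variable {I A : Type} [DecidableEq I] [Fintype A]

/-- Configurations whose local statistics are within `ε` of `a` and `b`. -/
def goodSet (w : A → ℝ) (S : A → Finset I) (a b ε : ℝ) : Set (I → Bool) :=
  {y | ∀ s, locField w S s y ∈ Set.Icc (a - ε) (a + ε) ∧
    pairField w S s y ∈ Set.Icc (b - ε) (b + ε)}

lemma goodSet_ordConnected {w : A → ℝ} {S : A → Finset I} (hw : Ferro w S) (a b ε : ℝ) :
    (goodSet w S a b ε).OrdConnected := by
  refine ⟨fun x hx z hz y hy s => ⟨?_, ?_⟩⟩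
  · exact ⟨(hx s).1.1.trans (locField_monotone hw s hy.1),
      (locField_monotone hw s hy.2).trans (hz s).1.2⟩
  · exact ⟨(hx s).2.1.trans (pairField_monotone hw s hy.1),
      (pairField_monotone hw s hy.2).trans (hz s).2.2⟩

lemma pairField_update_self (w : A → ℝ) (S : A → Finset I) (s : I) (y : I → Bool) (c : Bool) :
    pairField w S s (Function.update y s c) = pairField w S s y := by
  unfold pairField
  refine Finset.sum_congr rfl fun α _ => ?_
  congr 2
  refine Finset.sum_congr rfl fun t _ => ?_
  rw [mon_update_of_notMem fun h => Finset.notMem_erase s (S α) (Finset.mem_of_mem_erase h)]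

variable [Fintype I]

/-- The sum of the conditional probabilities that the coordinates are `true`. -/
def condTotal (w : A → ℝ) (S : A → Finset I) (y : I → Bool) : ℝ :=
  ∑ s, Real.sigmoid (locField w S s y)

lemma abs_condTotal_le (w : A → ℝ) (S : A → Finset I) (y : I → Bool) :
    |condTotal w S y| ≤ Fintype.card I := by
  refine (Finset.abs_sum_le_sum_abs _ _).trans ?_
  rw [Fintype.card, Finset.card_eq_sum_ones, Nat.cast_sum]
  refine Finset.sum_le_sum fun s _ => ?_
  rw [abs_of_pos (Real.sigmoid_pos _)]
  simpa using Real.sigmoid_le_one _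

lemma abs_condTotal_update_sub_le {w : A → ℝ} {S : A → Finset I} (hw : Ferro w S)
    {a b ε v δ ω : ℝ} (hv : 0 ≤ v) (hδ : 0 ≤ δ)
    (h : ∀ x ∈ Set.Icc (a - ε) (a + ε), |Real.sigmoid x * (1 - Real.sigmoid x) - v| ≤ δ)
    (hω : δ * (b + ε) + v * ε ≤ ω) {y : I → Bool} {t : I}
    (h0 : Function.update y t false ∈ goodSet w S a b ε)
    (h1 : Function.update y t true ∈ goodSet w S a b ε) :
    |condTotal w S (Function.update y t true) - condTotal w S (Function.update y t false) - v * b|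
      ≤ ω := by
  have hM := (h0 t).2
  rw [pairField_update_self] at hM
  have key : |condTotal w S (Function.update y t true) -
      condTotal w S (Function.update y t false) - v * pairField w S t y| ≤
      δ * pairField w S t y := by
    unfold condTotal
    rw [← sum_locField_update_sub, Finset.mul_sum, Finset.mul_sum, ← Finset.sum_sub_distrib,
      ← Finset.sum_sub_distrib]
    exact (Finset.abs_sum_le_sum_abs _ _).trans (Finset.sum_le_sum fun s _ =>
      abs_sigmoid_sub_le h (h0 s).1 (h1 s).1
        (locField_monotone hw s (update_false_le_update_true y t)))
  have h2 : |v * (pairField w S t y - b)| ≤ v * ε := by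
    rw [abs_mul, abs_of_nonneg hv]
    refine mul_le_mul_of_nonneg_left (abs_le.2 ⟨?_, ?_⟩) hv <;> linarith [hM.1, hM.2]
  have h3 : δ * pairField w S t y ≤ δ * (b + ε) := mul_le_mul_of_nonneg_left hM.2 hδ
  calc _ = |(condTotal w S (Function.update y t true) -
      condTotal w S (Function.update y t false) - v * pairField w S t y) +
      v * (pairField w S t y - b)| := by congr 1; ring
    _ ≤ _ := (abs_add_le _ _).trans (by linarith)

/-- The sum of the expected discrete derivatives of `G`. -/
def avgGrad (w : A → ℝ) (S : A → Finset I) (G : (I → Bool) → ℝ) : ℝ :=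
  ∑ s, avg w S (fun y => G (Function.update y s true) - G (Function.update y s false))

lemma cov_total_eq (w : A → ℝ) (S : A → Finset I) (G : (I → Bool) → ℝ) :
    cov w S total G = cov w S (condTotal w S) G +
      ∑ s, avg w S (fun y => Real.sigmoid (locField w S s y) *
        (1 - Real.sigmoid (locField w S s y)) *
        (G (Function.update y s true) - G (Function.update y s false))) := by
  simp_rw [← avg_sub_sigmoid_mul]
  have h : ∀ G : (I → Bool) → ℝ, ∑ s, avg w S (fun y => ((if y s then (1 : ℝ) else 0) -
      Real.sigmoid (locField w S s y)) * G y) =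
      avg w S (fun y => total y * G y) - avg w S (fun y => condTotal w S y * G y) := by
    intro G
    rw [← avg_sum, ← avg_sub]
    congr 1
    funext y
    rw [← Finset.sum_mul, Finset.sum_sub_distrib, sub_mul]
    rfl
  have h1 : avg w S total = avg w S (condTotal w S) := by
    have := h fun _ => 1
    simp_rw [avg_sub_sigmoid_mul] at this
    simp only [sub_self, mul_zero, avg_const, Finset.sum_const_zero, mul_one] at this
    linarith
  rw [h, cov, cov, h1]
  ring

/-- Approximate Stein identity for a ferromagnetic Gibbs distribution concentrated on
configurations with nearly constant local fields. -/
lemma abs_cov_total_sub_le {w : A → ℝ} {S : A → Finset I} (hw : Ferro w S)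
    {a b ε v δ ω : ℝ} (hv : 0 ≤ v) (hδ : 0 ≤ δ) (hδω : δ ≤ ω)
    (h : ∀ x ∈ Set.Icc (a - ε) (a + ε), |Real.sigmoid x * (1 - Real.sigmoid x) - v| ≤ δ)
    (hω : δ * (b + ε) + v * ε ≤ ω) (hv1 : v ≤ 1) {G : (I → Bool) → ℝ} {B : ℝ} (hG : Monotone G)
    (hB : ∀ y, |G y| ≤ B) :
    |(1 - v * b) * cov w S total G - v * avgGrad w S G| ≤
      ω * (cov w S total G + avgGrad w S G) +
        (4 * (Fintype.card I * (|v * b| + ω + 1)) * B + 2 * B * Fintype.card I) *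
          probCompl w S (goodSet w S a b ε) := by
  classical
  set K := goodSet w S a b ε with hK
  have hKc : K.OrdConnected := goodSet_ordConnected hw a b ε
  have hω0 : 0 ≤ ω := hδ.trans hδω
  have hN : (0 : ℝ) ≤ Fintype.card I := Nat.cast_nonneg _
  have hbd : ∀ c : ℝ, |c| ≤ |v * b| + ω → ∀ y : I → Bool,
      |c * total y - condTotal w S y| ≤ Fintype.card I * (|v * b| + ω + 1) := by
    intro c hc y
    refine (abs_sub _ _).trans ?_
    rw [abs_mul]
    have h1 := mul_le_mul hc (abs_total_le y) (abs_nonneg _) (by positivity)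
    have h2 := abs_condTotal_le w S y
    linarith
  have up : -(4 * (Fintype.card I * (|v * b| + ω + 1)) * B * probCompl w S K) ≤
      cov w S (fun y => (v * b + ω) * total y - condTotal w S y) G := by
    refine neg_le_cov_of_monotoneOn hw (monotoneOn_of_update hKc fun y s h0 h1 => ?_)
      (hbd _ ((abs_add_le _ _).trans (by rw [abs_of_nonneg hω0]))) hG hB
    have := abs_le.1 (abs_condTotal_update_sub_le hw hv hδ h hω h0 h1)
    rw [total_update]
    linarith
  have low : -(4 * (Fintype.card I * (|v * b| + ω + 1)) * B * probCompl w S K) ≤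
      cov w S (fun y => condTotal w S y - (v * b - ω) * total y) G := by
    refine neg_le_cov_of_monotoneOn hw (monotoneOn_of_update hKc fun y s h0 h1 => ?_)
      (fun y => ?_) hG hB
    · have := abs_le.1 (abs_condTotal_update_sub_le hw hv hδ h hω h0 h1)
      rw [total_update]
      linarith
    · rw [abs_sub_comm]
      exact hbd _ ((abs_sub _ _).trans (by rw [abs_of_nonneg hω0])) y
  rw [cov_sub_left, cov_const_mul_left] at up low
  set X := ∑ s, avg w S (fun y => Real.sigmoid (locField w S s y) *
    (1 - Real.sigmoid (locField w S s y)) *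
    (G (Function.update y s true) - G (Function.update y s false))) with hX
  have hXX : |X - v * avgGrad w S G| ≤ ω * avgGrad w S G +
      2 * B * Fintype.card I * probCompl w S K := by
    have hterm : ∀ s ∈ (univ : Finset I), |avg w S (fun y => Real.sigmoid (locField w S s y) *
        (1 - Real.sigmoid (locField w S s y)) *
        (G (Function.update y s true) - G (Function.update y s false))) -
        v * avg w S (fun y => G (Function.update y s true) - G (Function.update y s false))| ≤
        ω * avg w S (fun y => G (Function.update y s true) - G (Function.update y s false)) +
          2 * B * probCompl w S K := by
      intro s _
      rw [← avg_const_mul, ← avg_sub, ← avg_const_mul]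
      unfold probCompl
      rw [← avg_const_mul, ← avg_add]
      refine abs_avg_le w S fun y => ?_
      rw [← sub_mul, abs_mul]
      have hd : 0 ≤ G (Function.update y s true) - G (Function.update y s false) :=
        sub_nonneg.2 (hG (update_false_le_update_true y s))
      have hd2 : G (Function.update y s true) - G (Function.update y s false) ≤ 2 * B := by
        have := abs_le.1 (hB (Function.update y s true))
        have := abs_le.1 (hB (Function.update y s false))
        linarith
      rw [abs_of_nonneg hd]
      split_ifs with hy
      · have := (h _ (hy s).1).trans hδω
        simpa using mul_le_mul_of_nonneg_right this hd
      · have h1 : |Real.sigmoid (locField w S s y) * (1 - Real.sigmoid (locField w S s y)) - v|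
            ≤ 1 := by
          have := Real.sigmoid_nonneg (locField w S s y)
          have := Real.sigmoid_le_one (locField w S s y)
          rw [abs_le]
          constructor <;> nlinarith
        have h2 := mul_le_mul_of_nonneg_right h1 hd
        have h3 := mul_nonneg hω0 hd
        linarith
    rw [hX, avgGrad, Finset.mul_sum, Finset.mul_sum, ← Finset.sum_sub_distrib]
    refine (Finset.abs_sum_le_sum_abs _ _).trans ((Finset.sum_le_sum hterm).trans_eq ?_)
    rw [Finset.sum_add_distrib, Finset.sum_const, nsmul_eq_mul, Finset.card_univ]
    ring
  have hcov := cov_total_eq w S G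
  rw [← hX] at hcov
  have := abs_le.1 hXX
  rw [abs_le]
  constructor <;> nlinarith

end SteinIdentity

section BernoulliSweep

variable {I : Type} [DecidableEq I]

/-- Averaging over the coordinate `s`, resampled with success probability `q`. -/
def bern (q : ℝ) (s : I) (F : (I → Bool) → ℝ) (y : I → Bool) : ℝ :=
  q * F (Function.update y s true) + (1 - q) * F (Function.update y s false)

/-- Averaging over the coordinates in a list, resampled independently with success
probability `q`. -/
def sweep (q : ℝ) : List I → ((I → Bool) → ℝ) → (I → Bool) → ℝ
  | [], F => F
  | s :: l, F => bern q s (sweep q l F)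

lemma bern_mono {q : ℝ} (h0 : 0 ≤ q) (h1 : q ≤ 1) (s : I) {F G : (I → Bool) → ℝ}
    (h : ∀ y, F y ≤ G y) (y : I → Bool) : bern q s F y ≤ bern q s G y :=
  add_le_add (mul_le_mul_of_nonneg_left (h _) h0)
    (mul_le_mul_of_nonneg_left (h _) (sub_nonneg.2 h1))

lemma sweep_mono {q : ℝ} (h0 : 0 ≤ q) (h1 : q ≤ 1) (l : List I) {F G : (I → Bool) → ℝ}
    (h : ∀ y, F y ≤ G y) (y : I → Bool) : sweep q l F y ≤ sweep q l G y := by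
  induction l generalizing y with
  | nil => exact h y
  | cons s l ih => exact bern_mono h0 h1 s ih y

lemma sweep_const (q : ℝ) (l : List I) (c : ℝ) (y : I → Bool) :
    sweep q l (fun _ => c) y = c := by
  induction l generalizing y with
  | nil => rfl
  | cons s l ih => simp only [sweep, bern, ih]; ring

lemma sweep_const_mul (q : ℝ) (l : List I) (c : ℝ) (F : (I → Bool) → ℝ) (y : I → Bool) :
    sweep q l (fun y => c * F y) y = c * sweep q l F y := by
  induction l generalizing y with
  | nil => rfl
  | cons s l ih => simp only [sweep, bern, ih]; ring

lemma sweep_sum {J : Type} (q : ℝ) (l : List I) (T : Finset J) (F : J → (I → Bool) → ℝ)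
    (y : I → Bool) :
    sweep q l (fun y => ∑ j ∈ T, F j y) y = ∑ j ∈ T, sweep q l (F j) y := by
  induction l generalizing y with
  | nil => rfl
  | cons s l ih => simp only [sweep, bern, ih, Finset.mul_sum, Finset.sum_add_distrib]

lemma sweep_mon (q : ℝ) {l : List I} (hl : l.Nodup) (T : Finset I) (y : I → Bool) :
    sweep q l (mon T) y = q ^ (T ∩ l.toFinset).card * mon (T \ l.toFinset) y := by
  induction l generalizing y with
  | nil => simp [sweep]
  | cons s l ih =>
    rw [List.nodup_cons] at hl
    simp only [sweep, bern, ih hl.2]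
    have hs : s ∉ l.toFinset := by simpa using hl.1
    rw [List.toFinset_cons]
    by_cases hT : s ∈ T
    · rw [Finset.inter_insert_of_mem hT, Finset.card_insert_of_notMem (by simp [hl.1]),
        mon_update_false (Finset.mem_sdiff.2 ⟨hT, hs⟩), mon_update_true,
        Finset.sdiff_insert, pow_succ]
      ring
    · rw [Finset.inter_insert_of_notMem hT, mon_update_of_notMem (by simp [hT]),
        mon_update_of_notMem (by simp [hT]), Finset.sdiff_insert_of_notMem hT]
      ring

lemma sweep_univ_mon [Fintype I] (q : ℝ) (T : Finset I) (y : I → Bool) :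
    sweep q univ.toList (mon T) y = q ^ T.card := by
  rw [sweep_mon q (Finset.nodup_toList _)]
  have : T \ univ = ∅ := Finset.sdiff_eq_empty_iff_subset.2 (Finset.subset_univ T)
  simp [mon_empty, this]

lemma abs_bern_update_sub_le {q : ℝ} (h0 : 0 ≤ q) (h1 : q ≤ 1) (s t : I) {F : (I → Bool) → ℝ}
    {c : ℝ} (hF : ∀ y, |F (Function.update y t true) - F (Function.update y t false)| ≤ c)
    (y : I → Bool) :
    |bern q s F (Function.update y t true) - bern q s F (Function.update y t false)| ≤ c := by
  unfold bern
  by_cases hst : s = t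
  · subst hst
    simpa using (abs_nonneg _).trans (hF y)
  · simp only [Function.update_comm (Ne.symm hst)]
    have e1 := abs_le.1 (hF (Function.update y s true))
    have e2 := abs_le.1 (hF (Function.update y s false))
    have := sub_nonneg.2 h1
    rw [abs_le]
    constructor <;> nlinarith

lemma abs_sweep_update_sub_le {q : ℝ} (h0 : 0 ≤ q) (h1 : q ≤ 1) (l : List I) (t : I)
    {F : (I → Bool) → ℝ} {c : ℝ}
    (hF : ∀ y, |F (Function.update y t true) - F (Function.update y t false)| ≤ c)
    (y : I → Bool) :
    |sweep q l F (Function.update y t true) - sweep q l F (Function.update y t false)| ≤ c := by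
  induction l generalizing y with
  | nil => exact hF y
  | cons s l ih => exact abs_bern_update_sub_le h0 h1 s t ih y

lemma bern_exp_le {q : ℝ} (h0 : 0 ≤ q) (h1 : q ≤ 1) (s : I) {F : (I → Bool) → ℝ} {c μ : ℝ}
    (hμ : 0 ≤ μ) (hc : μ * c ≤ 1)
    (hF : ∀ y, |F (Function.update y s true) - F (Function.update y s false)| ≤ c)
    (y : I → Bool) :
    bern q s (fun y => Real.exp (μ * F y)) y ≤ Real.exp (μ * bern q s F y + μ ^ 2 * c ^ 2) := by
  unfold bern
  set a := F (Function.update y s true)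
  set b := F (Function.update y s false)
  have hab : |a - b| ≤ c := hF y
  have hμab : |μ * (a - b)| ≤ μ * c := by
    rw [abs_mul, abs_of_nonneg hμ]
    exact mul_le_mul_of_nonneg_left hab hμ
  have hexp : ∀ x : ℝ, |x| ≤ μ * c → Real.exp x ≤ 1 + x + μ ^ 2 * c ^ 2 := by
    intro x hx
    have e1 := Real.abs_exp_sub_one_sub_id_le (hx.trans hc)
    have e2 : x ^ 2 ≤ (μ * c) ^ 2 := sq_le_sq.2 (by rwa [abs_of_nonneg ((abs_nonneg x).trans hx)])
    have := abs_le.1 e1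
    nlinarith
  have hq : 0 ≤ 1 - q := sub_nonneg.2 h1
  have e1 := hexp ((1 - q) * (μ * (a - b))) (by
    rw [abs_mul, abs_of_nonneg hq]
    nlinarith [abs_nonneg (μ * (a - b))])
  have e2 := hexp (-(q * (μ * (a - b)))) (by
    rw [abs_neg, abs_mul, abs_of_nonneg h0]
    nlinarith [abs_nonneg (μ * (a - b))])
  have e3 : q * Real.exp ((1 - q) * (μ * (a - b))) + (1 - q) * Real.exp (-(q * (μ * (a - b)))) ≤
      Real.exp (μ ^ 2 * c ^ 2) := by
    have := Real.add_one_le_exp (μ ^ 2 * c ^ 2)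
    nlinarith
  have e4 := mul_le_mul_of_nonneg_left e3 (Real.exp_pos (μ * (q * a + (1 - q) * b))).le
  rw [← Real.exp_add] at e4
  refine le_trans (le_of_eq ?_) e4
  change q * Real.exp (μ * a) + (1 - q) * Real.exp (μ * b) = _
  rw [mul_add, mul_left_comm, ← Real.exp_add, mul_left_comm _ (1 - q), ← Real.exp_add]
  congr 3 <;> ring

/-- Exponential moment bound for functions with bounded differences. -/
lemma sweep_exp_le {q : ℝ} (h0 : 0 ≤ q) (h1 : q ≤ 1) (l : List I) {F : (I → Bool) → ℝ}
    {c : I → ℝ} {μ : ℝ} (hμ : 0 ≤ μ) (hc : ∀ s, μ * c s ≤ 1)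
    (hF : ∀ s y, |F (Function.update y s true) - F (Function.update y s false)| ≤ c s)
    (y : I → Bool) :
    sweep q l (fun y => Real.exp (μ * F y)) y ≤
      Real.exp (μ * sweep q l F y + μ ^ 2 * (l.map fun s => c s ^ 2).sum) := by
  induction l generalizing y with
  | nil => simp [sweep]
  | cons s l ih =>
    refine (bern_mono h0 h1 s ih y).trans ?_
    have key := bern_exp_le h0 h1 s hμ (hc s) (abs_sweep_update_sub_le h0 h1 l s (hF s)) y
    rw [List.map_cons, List.sum_cons]
    set K := (l.map fun s => c s ^ 2).sum
    have e : bern q s (fun y => Real.exp (μ * sweep q l F y + μ ^ 2 * K)) y =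
        bern q s (fun y => Real.exp (μ * sweep q l F y)) y * Real.exp (μ ^ 2 * K) := by
      simp only [bern, Real.exp_add]
      ring
    rw [e]
    refine (mul_le_mul_of_nonneg_right key (Real.exp_pos _).le).trans_eq ?_
    rw [← Real.exp_add]
    congr 1
    simp only [sweep]
    ring

/-- Exponential tail bound for functions with bounded differences. -/
lemma sweep_indicator_le [Fintype I] {q : ℝ} (h0 : 0 ≤ q) (h1 : q ≤ 1) {F : (I → Bool) → ℝ}
    {c : I → ℝ} {C δ r x : ℝ} (hC : 0 < C) (hδ : 0 < δ) (hx : 0 < x)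
    (hc0 : ∀ s, 0 ≤ c s) (hc : ∀ s, x * c s ≤ C) (hcsum : ∑ s, c s ≤ C)
    (hF : ∀ s y, |F (Function.update y s true) - F (Function.update y s false)| ≤ c s)
    (y : I → Bool) (hr : sweep q univ.toList F y + δ ≤ r) :
    sweep q univ.toList (fun y => if r < F y then 1 else 0) y ≤
      Real.exp (-(min (1 / C) (δ / (2 * C ^ 2)) * δ / 2 * x)) := by
  set θ := min (1 / C) (δ / (2 * C ^ 2)) with hθ
  have hθ0 : 0 < θ := lt_min (by positivity) (by positivity)
  have hθ1 : θ * C ≤ 1 := by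
    have := min_le_left (1 / C) (δ / (2 * C ^ 2))
    rwa [← hθ, le_div_iff₀ hC] at this
  have hθ2 : θ * (2 * C ^ 2) ≤ δ := by
    have := min_le_right (1 / C) (δ / (2 * C ^ 2))
    rwa [← hθ, le_div_iff₀ (by positivity)] at this
  have hμ : 0 ≤ θ * x := by positivity
  have step1 : sweep q univ.toList (fun y => if r < F y then 1 else 0) y ≤
      sweep q univ.toList (fun y => Real.exp (-(θ * x * r)) * Real.exp (θ * x * F y)) y := by
    refine sweep_mono h0 h1 _ (fun y => ?_) y
    rw [← Real.exp_add]
    split_ifs with h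
    · refine Real.one_le_exp ?_
      nlinarith
    · positivity
  refine step1.trans ?_
  rw [sweep_const_mul]
  have step2 := sweep_exp_le h0 h1 univ.toList hμ
    (fun s => by nlinarith [hc s, mul_le_mul_of_nonneg_left (hc s) hθ0.le]) hF y
  refine (mul_le_mul_of_nonneg_left step2 (Real.exp_pos _).le).trans ?_
  rw [← Real.exp_add, Finset.sum_map_toList]
  refine Real.exp_le_exp.2 ?_
  have hsq : x * ∑ s, c s ^ 2 ≤ C ^ 2 := by
    rw [Finset.mul_sum]
    calc ∑ s, x * c s ^ 2 ≤ ∑ s, C * c s := Finset.sum_le_sum fun s _ => by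
          nlinarith [hc s, hc0 s]
      _ ≤ C ^ 2 := by rw [← Finset.mul_sum]; nlinarith
  have h3 : (θ * x) ^ 2 * ∑ s, c s ^ 2 ≤ θ * x * (δ / 2) := by
    calc (θ * x) ^ 2 * ∑ s, c s ^ 2 = θ * x * (θ * (x * ∑ s, c s ^ 2)) := by ring
      _ ≤ θ * x * (θ * C ^ 2) := by gcongr
      _ ≤ θ * x * (δ / 2) := by gcongr; linarith
  have h4 : θ * x * (sweep q univ.toList F y + δ) ≤ θ * x * r :=
    mul_le_mul_of_nonneg_left hr hμ
  nlinarith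

/-- Coordinatewise monotonicity: increasing for `e > 0` and decreasing for `e < 0`. -/
def SignMono (e : ℝ) (g : (I → Bool) → ℝ) : Prop :=
  ∀ y s, 0 ≤ e * (g (Function.update y s true) - g (Function.update y s false))

lemma signMono_bern {e q : ℝ} (h0 : 0 ≤ q) (h1 : q ≤ 1) (s : I) {g : (I → Bool) → ℝ}
    (hg : SignMono e g) : SignMono e (bern q s g) := by
  intro y t
  unfold bern
  by_cases hst : s = t
  · subst hst
    simp
  · simp only [Function.update_comm (Ne.symm hst)]
    have e1 := mul_nonneg h0 (hg (Function.update y s true) t)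
    have e2 := mul_nonneg (sub_nonneg.2 h1) (hg (Function.update y s false) t)
    linarith

lemma signMono_sweep {e q : ℝ} (h0 : 0 ≤ q) (h1 : q ≤ 1) (l : List I) {g : (I → Bool) → ℝ}
    (hg : SignMono e g) : SignMono e (sweep q l g) := by
  induction l with
  | nil => exact hg
  | cons s l ih => exact signMono_bern h0 h1 s ih

/-- Under the extremal success probability, averaging dominates a signed-monotone function. -/
lemma le_sweep_extremal {e : ℝ} (he : e = 1 ∨ e = -1) (l : List I) {g : (I → Bool) → ℝ}
    (hg : SignMono e g) (y : I → Bool) : g y ≤ sweep ((1 + e) / 2) l g y := by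
  have h0 : 0 ≤ (1 + e) / 2 := by rcases he with rfl | rfl <;> norm_num
  have h1 : (1 + e) / 2 ≤ 1 := by rcases he with rfl | rfl <;> norm_num
  induction l generalizing y with
  | nil => exact le_rfl
  | cons s l ih =>
    have key : ∀ y, g y ≤ bern ((1 + e) / 2) s g y := by
      intro y
      have h := hg y s
      have hy : y = Function.update y s true ∨ y = Function.update y s false := by
        cases hb : y s
        · right; rw [← hb, Function.update_eq_self]
        · left; rw [← hb, Function.update_eq_self]
      unfold bern
      rcases he with rfl | rfl
      · rcases hy with hy | hy <;> rw [hy] <;> simp only [Function.update_idem] <;> linarith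
      · rcases hy with hy | hy <;> rw [hy] <;> simp only [Function.update_idem] <;> linarith
    exact (key y).trans (bern_mono h0 h1 s ih y)

variable {A : Type} [Fintype A] [Fintype I]

/-- Comparison of a Gibbs distribution with a product measure, up to the probability that some
conditional probability is on the wrong side of `q`. -/
lemma avg_le_avg_sweep (w : A → ℝ) (S : A → Finset I) {e q : ℝ} (he : e = 1 ∨ e = -1)
    (h0 : 0 ≤ q) (h1 : q ≤ 1) (l : List I) {g : (I → Bool) → ℝ} (hg : SignMono e g)
    (hg0 : ∀ y, 0 ≤ g y) (hg1 : ∀ y, g y ≤ 1) :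
    avg w S g ≤ avg w S (sweep q l g) +
      (l.map fun s => avg w S fun y =>
        if 0 < e * (Real.sigmoid (locField w S s y) - q) then 1 else 0).sum := by
  induction l with
  | nil => simp [sweep]
  | cons s l ih =>
    rw [List.map_cons, List.sum_cons, ← add_assoc]
    refine ih.trans (add_le_add_left ?_ _)
    rw [avg_resample w S s (sweep q l g), ← avg_add]
    refine avg_mono w S fun y => ?_
    have hm := signMono_sweep h0 h1 l hg y s
    have b0 : ∀ y, 0 ≤ sweep q l g y := fun y =>
      (sweep_const q l 0 y).symm.le.trans (sweep_mono h0 h1 l hg0 y)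
    have b1 : ∀ y, sweep q l g y ≤ 1 := fun y =>
      (sweep_mono h0 h1 l hg1 y).trans (sweep_const q l 1 y).le
    have c1 := b0 (Function.update y s true)
    have c2 := b1 (Function.update y s true)
    have c3 := b0 (Function.update y s false)
    have c4 := b1 (Function.update y s false)
    simp only [sweep, bern]
    set a := sweep q l g (Function.update y s true)
    set b := sweep q l g (Function.update y s false)
    have hσ0 := Real.sigmoid_nonneg (locField w S s y)
    have hσ1 := Real.sigmoid_le_one (locField w S s y)
    have hsq : e * e = 1 := by rcases he with rfl | rfl <;> norm_num
    suffices h : (Real.sigmoid (locField w S s y) - q) * (a - b) ≤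
        if 0 < e * (Real.sigmoid (locField w S s y) - q) then 1 else 0 by linarith
    split_ifs with hpos
    · have ha : |a - b| ≤ 1 := abs_le.2 ⟨by linarith, by linarith⟩
      have hs : |Real.sigmoid (locField w S s y) - q| ≤ 1 := abs_le.2 ⟨by linarith, by linarith⟩
      refine (le_abs_self _).trans ?_
      rw [abs_mul]
      exact mul_le_one₀ hs (abs_nonneg _) ha
    · have h2 := mul_nonneg (neg_nonneg.2 (not_lt.1 hpos)) hm
      have h3 : (Real.sigmoid (locField w S s y) - q) * (a - b) =
          (e * (Real.sigmoid (locField w S s y) - q)) * (e * (a - b)) := by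
        linear_combination (-(Real.sigmoid (locField w S s y) - q) * (a - b)) * hsq
      linarith

lemma sweep_locField (w : A → ℝ) (S : A → Finset I) (s : I) (q c : ℝ) (y : I → Bool) :
    sweep q univ.toList (fun y => c * locField w S s y) y =
      c * ∑ α, if s ∈ S α then w α * q ^ ((S α).card - 1) else 0 := by
  rw [sweep_const_mul]
  unfold locField
  rw [sweep_sum]
  congr 1
  refine Finset.sum_congr rfl fun α _ => ?_
  split_ifs with hs
  · rw [sweep_const_mul, sweep_univ_mon, Finset.card_erase_of_mem hs]
  · rw [sweep_const]

lemma sweep_pairField (w : A → ℝ) (S : A → Finset I) (t : I) (q c : ℝ) (y : I → Bool) :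
    sweep q univ.toList (fun y => c * pairField w S t y) y =
      c * ∑ α, if t ∈ S α then
        w α * (((S α).card - 1 : ℕ) * q ^ ((S α).card - 2)) else 0 := by
  rw [sweep_const_mul]
  unfold pairField
  rw [sweep_sum]
  congr 1
  refine Finset.sum_congr rfl fun α _ => ?_
  split_ifs with ht
  · rw [sweep_const_mul, sweep_sum]
    congr 1
    have : ∀ s ∈ (S α).erase t, sweep q univ.toList (mon (((S α).erase t).erase s)) y =
        q ^ ((S α).card - 2) := fun s hs => by
      rw [sweep_univ_mon, Finset.card_erase_of_mem hs, Finset.card_erase_of_mem ht]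
      rfl
    rw [Finset.sum_congr rfl this, Finset.sum_const, nsmul_eq_mul, Finset.card_erase_of_mem ht]
  · rw [sweep_const]

end BernoulliSweep

section MeanField

open Filter Topology

lemma eventually_mul_pow_mul_exp_le (K : ℝ) (m : ℕ) {c : ℝ} (hc : 0 < c) :
    ∀ᶠ n : ℕ in atTop, K * (n : ℝ) ^ m * Real.exp (-(c * n)) ≤ Real.exp (-(c / 2 * n)) := by
  have h1 : Tendsto (fun x : ℝ => x ^ m * Real.exp (-(c / 2) * x)) atTop (𝓝 0) :=
    by simpa using tendsto_rpow_mul_exp_neg_mul_atTop_nhds_zero m (c / 2) (by positivity)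
  have h2 := (h1.const_mul K).comp tendsto_natCast_atTop_atTop
  rw [mul_zero] at h2
  filter_upwards [h2.eventually_le_const one_pos] with n hn
  simp only [Function.comp] at hn
  calc K * (n : ℝ) ^ m * Real.exp (-(c * n))
      = K * ((n : ℝ) ^ m * Real.exp (-(c / 2) * n)) * Real.exp (-(c / 2 * n)) := by
        rw [show -(c * (n : ℝ)) = -(c / 2) * n + -(c / 2 * n) by ring, Real.exp_add]
        ring
    _ ≤ _ := mul_le_of_le_one_left (Real.exp_pos _).le hn

variable {I A : ℕ → Type} [∀ n, Fintype (I n)] [∀ n, DecidableEq (I n)] [∀ n, Fintype (A n)]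

/-- A sequence of systems whose local fields under product measures concentrate at `Λ`, with
derivative `Λ'`. -/
structure MeanField (w : ∀ n, A n → ℝ) (S : ∀ n, A n → Finset (I n)) (Λ Λ' : ℝ → ℝ) (D : ℕ)
    (C : ℝ) : Prop where
  ferro : ∀ n, Ferro (w n) (S n)
  card_le : ∀ n α, (S n α).card ≤ D
  card_index_le : ∀ n, Fintype.card (I n) ≤ n ^ 2
  coupling_le : ∀ᶠ n in atTop, ∀ s t, n * coupling (w n) (S n) s t ≤ C
  mean : ∀ q ∈ Set.Icc (0 : ℝ) 1, ∀ η > 0, ∀ᶠ n in atTop, ∀ s : I n,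
    |(∑ α, if s ∈ S n α then w n α * q ^ ((S n α).card - 1) else 0) - Λ q| ≤ η
  mean' : ∀ q ∈ Set.Icc (0 : ℝ) 1, ∀ η > 0, ∀ᶠ n in atTop, ∀ s : I n,
    |(∑ α, if s ∈ S n α then
      w n α * (((S n α).card - 1 : ℕ) * q ^ ((S n α).card - 2)) else 0) - Λ' q| ≤ η

/-- Asymptotic domination by the product measure with success probability `q`, up to
exponentially small errors. -/
def Dominated (w : ∀ n, A n → ℝ) (S : ∀ n, A n → Finset (I n)) (e q : ℝ) : Prop :=
  ∃ c > 0, ∀ᶠ n : ℕ in atTop, ∀ g : (I n → Bool) → ℝ, SignMono e g → (∀ y, 0 ≤ g y) →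
    (∀ y, g y ≤ 1) →
    avg (w n) (S n) g ≤ avg (w n) (S n) (sweep q univ.toList g) + Real.exp (-(c * n))

/-- The bounded differences condition at scale `x`. -/
def BoundedDiff {J : Type} [Fintype J] [DecidableEq J] (x C : ℝ) (F : (J → Bool) → ℝ) : Prop :=
  ∃ c : J → ℝ, (∀ t, 0 ≤ c t) ∧ (∀ t, x * c t ≤ C) ∧ ∑ t, c t ≤ C ∧
    ∀ t y, |F (Function.update y t true) - F (Function.update y t false)| ≤ c t

variable {w : ∀ n, A n → ℝ} {S : ∀ n, A n → Finset (I n)} {Λ Λ' : ℝ → ℝ} {D : ℕ} {C : ℝ}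

lemma dominated_extremal {e : ℝ} (he : e = 1 ∨ e = -1) : Dominated w S e ((1 + e) / 2) := by
  refine ⟨1, one_pos, Eventually.of_forall fun n g hg _ _ => ?_⟩
  have := avg_mono (w n) (S n) (le_sweep_extremal he univ.toList hg)
  linarith [Real.exp_pos (-(1 * (n : ℝ)))]

lemma Dominated.tail {e q : ℝ} (hd : Dominated w S e q) (he : e = 1 ∨ e = -1)
    (hq : q ∈ Set.Icc (0 : ℝ) 1) {F : ∀ n, I n → (I n → Bool) → ℝ} {K δ r : ℝ} (hK : 0 < K)
    (hδ : 0 < δ) (hm : ∀ n s, SignMono e (F n s))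
    (hF : ∀ᶠ n : ℕ in atTop, ∀ s, BoundedDiff (n : ℝ) K (F n s))
    (hr : ∀ᶠ n : ℕ in atTop, ∀ s y, sweep q univ.toList (F n s) y + δ ≤ r) :
    ∃ c > 0, ∀ᶠ n : ℕ in atTop, ∀ s,
      avg (w n) (S n) (fun y => if r < F n s y then 1 else 0) ≤ Real.exp (-(c * n)) := by
  obtain ⟨c₁, hc₁, h1⟩ := hd
  set c₂ := min (1 / K) (δ / (2 * K ^ 2)) * δ / 2 with hc₂
  have hc₂0 : 0 < c₂ := by
    have : 0 < min (1 / K) (δ / (2 * K ^ 2)) := lt_min (by positivity) (by positivity)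
    positivity
  have hc0 : 0 < min c₁ c₂ := lt_min hc₁ hc₂0
  refine ⟨min c₁ c₂ / 2, half_pos hc0, ?_⟩
  filter_upwards [h1, hF, hr, eventually_mul_pow_mul_exp_le 2 0 hc0, eventually_gt_atTop 0]
    with n h1 hF hr h4 hn s
  obtain ⟨c, hcn, hcC, hcs, hcd⟩ := hF s
  have hn' : (0 : ℝ) < n := Nat.cast_pos.2 hn
  have hmono : SignMono e (fun y => if r < F n s y then (1 : ℝ) else 0) := by
    intro y t
    have h5 := hm n s y t
    dsimp only
    rcases he with rfl | rfl
    · split_ifs <;> linarith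
    · split_ifs <;> linarith
  have h5 := h1 _ hmono (fun y => by split_ifs <;> norm_num) (fun y => by split_ifs <;> norm_num)
  have h6 := avg_mono (w n) (S n) fun y =>
    sweep_indicator_le hq.1 hq.2 hK hδ hn' hcn hcC hcs hcd y (hr s y)
  rw [avg_const, ← hc₂] at h6
  have h7 : Real.exp (-(c₁ * n)) ≤ Real.exp (-(min c₁ c₂ * n)) := by
    gcongr; exact min_le_left _ _
  have h8 : Real.exp (-(c₂ * n)) ≤ Real.exp (-(min c₁ c₂ * n)) := by
    gcongr; exact min_le_right _ _
  linarith

lemma MeanField.boundedDiff (h : MeanField w S Λ Λ' D C) {e : ℝ} (he : e = 1 ∨ e = -1) :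
    ∃ K > 0, ∀ᶠ n : ℕ in atTop, ∀ s, BoundedDiff (n : ℝ) K (fun y => e * locField (w n) (S n) s y) ∧
      BoundedDiff (n : ℝ) K (fun y => e * pairField (w n) (S n) s y) := by
  have hae : |e| = 1 := by rcases he with rfl | rfl <;> norm_num
  set K := (D + 1) * (|C| + |Λ' 1| + 1) with hKdef
  have hD : (0 : ℝ) ≤ D := Nat.cast_nonneg _
  refine ⟨K, by positivity, ?_⟩
  filter_upwards [h.coupling_le, h.mean' 1 (by simp) 1 one_pos] with n h1 h2 s
  have hcn : ∀ t, 0 ≤ coupling (w n) (S n) s t := coupling_nonneg (h.ferro n) s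
  have hsum : ∑ t, coupling (w n) (S n) s t ≤ |C| + |Λ' 1| + 1 := by
    have h3 := abs_le.1 (h2 s)
    rw [sum_coupling]
    have : ∀ α ∈ (univ : Finset (A n)), (if s ∈ S n α then w n α * ((S n α).card - 1 : ℝ) else 0) =
        if s ∈ S n α then w n α * (((S n α).card - 1 : ℕ) * 1 ^ ((S n α).card - 2)) else 0 := by
      intro α _
      split_ifs with hs
      · rw [Nat.cast_sub (Finset.card_pos.2 ⟨s, hs⟩)]
        simp
      · rfl
    rw [Finset.sum_congr rfl this]
    linarith [le_abs_self (Λ' 1), abs_nonneg C]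
  have hC : ∀ t, n * coupling (w n) (S n) s t ≤ |C| + |Λ' 1| + 1 := fun t => by
    linarith [h1 s t, le_abs_self C, abs_nonneg (Λ' 1)]
  have hfin : (∀ t, 0 ≤ (D + 1) * coupling (w n) (S n) s t) ∧
      (∀ t, n * ((D + 1) * coupling (w n) (S n) s t) ≤ K) ∧
      ∑ t, (D + 1) * coupling (w n) (S n) s t ≤ K := by
    refine ⟨fun t => mul_nonneg (by positivity) (hcn t), fun t => ?_, ?_⟩
    · rw [mul_left_comm]
      exact mul_le_mul_of_nonneg_left (hC t) (by positivity)
    · rw [← Finset.mul_sum]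
      exact mul_le_mul_of_nonneg_left hsum (by positivity)
  refine ⟨⟨_, hfin.1, hfin.2.1, hfin.2.2, fun t y => ?_⟩,
    ⟨_, hfin.1, hfin.2.1, hfin.2.2, fun t y => ?_⟩⟩
  · rw [← mul_sub, abs_mul, hae, one_mul]
    refine (abs_locField_update_sub_le (h.ferro n) s t y).trans ?_
    nlinarith [hcn t]
  · rw [← mul_sub, abs_mul, hae, one_mul]
    refine (abs_pairField_update_sub_le (h.ferro n) (h.card_le n) s t y).trans ?_
    nlinarith [hcn t]

lemma SignMono.const_mul_of_monotone {J : Type} [DecidableEq J] {e : ℝ} {F : (J → Bool) → ℝ}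
    (hF : Monotone F) : SignMono e (fun y => e * F y) := fun y s => by
  have := hF (update_false_le_update_true y s)
  have h2 := mul_nonneg (mul_self_nonneg e) (sub_nonneg.2 this)
  linarith

lemma MeanField.tail (h : MeanField w S Λ Λ' D C) {e q : ℝ} (he : e = 1 ∨ e = -1)
    (hq : q ∈ Set.Icc (0 : ℝ) 1) (hd : Dominated w S e q) {r : ℝ} (hr : e * Λ q < r) :
    ∃ c > 0, ∀ᶠ n : ℕ in atTop, ∀ s, avg (w n) (S n)
      (fun y => if r < e * locField (w n) (S n) s y then 1 else 0) ≤ Real.exp (-(c * n)) := by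
  obtain ⟨K, hK, hb⟩ := h.boundedDiff he
  refine hd.tail he hq (F := fun n s y => e * locField (w n) (S n) s y) (δ := (r - e * Λ q) / 2) hK
    (by linarith) (fun n s => SignMono.const_mul_of_monotone (locField_monotone (h.ferro n) s))
    (hb.mono fun n hn s => (hn s).1) ?_
  filter_upwards [h.mean q hq ((r - e * Λ q) / 2) (by linarith)] with n hn s y
  rw [sweep_locField]
  have := abs_le.1 (hn s)
  rcases he with rfl | rfl <;> linarith

lemma MeanField.tail' (h : MeanField w S Λ Λ' D C) {e q : ℝ} (he : e = 1 ∨ e = -1)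
    (hq : q ∈ Set.Icc (0 : ℝ) 1) (hd : Dominated w S e q) {r : ℝ} (hr : e * Λ' q < r) :
    ∃ c > 0, ∀ᶠ n : ℕ in atTop, ∀ s, avg (w n) (S n)
      (fun y => if r < e * pairField (w n) (S n) s y then 1 else 0) ≤ Real.exp (-(c * n)) := by
  obtain ⟨K, hK, hb⟩ := h.boundedDiff he
  refine hd.tail he hq (F := fun n s y => e * pairField (w n) (S n) s y) (δ := (r - e * Λ' q) / 2) hK
    (by linarith) (fun n s => SignMono.const_mul_of_monotone (pairField_monotone (h.ferro n) s))
    (hb.mono fun n hn s => (hn s).2) ?_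
  filter_upwards [h.mean' q hq ((r - e * Λ' q) / 2) (by linarith)] with n hn s y
  rw [sweep_pairField]
  have := abs_le.1 (hn s)
  rcases he with rfl | rfl <;> linarith

lemma MeanField.dominated_step (h : MeanField w S Λ Λ' D C) {e q q' : ℝ} (he : e = 1 ∨ e = -1)
    (hq : q ∈ Set.Icc (0 : ℝ) 1) (hd : Dominated w S e q) (hq' : q' ∈ Set.Icc (0 : ℝ) 1)
    (hlt : 0 < e * (q' - Real.sigmoid (Λ q))) : Dominated w S e q' := by
  obtain ⟨δ, hδ, hs⟩ : ∃ δ > 0, 0 < e * (q' - Real.sigmoid (Λ q + e * δ)) := by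
    have hcont : ContinuousAt (fun δ => e * (q' - Real.sigmoid (Λ q + e * δ))) 0 := by
      have := continuous_sigmoid
      fun_prop
    have h1 : ∀ᶠ δ in 𝓝[>] (0 : ℝ), 0 < e * (q' - Real.sigmoid (Λ q + e * δ)) :=
      (hcont.eventually_const_lt (by simpa using hlt)).filter_mono nhdsWithin_le_nhds
    obtain ⟨δ, h2, h3⟩ := (h1.and self_mem_nhdsWithin).exists
    exact ⟨δ, h3, h2⟩
  obtain ⟨c, hc, ht⟩ := h.tail he hq hd (r := e * Λ q + δ) (by linarith)
  refine ⟨c / 2, half_pos hc, ?_⟩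
  filter_upwards [ht, eventually_mul_pow_mul_exp_le 1 2 hc] with n h1 h2 g hg hg0 hg1
  refine (avg_le_avg_sweep (w n) (S n) he hq'.1 hq'.2 univ.toList hg hg0 hg1).trans
    (add_le_add_right ?_ _)
  rw [Finset.sum_map_toList]
  have h3 : ∀ s ∈ (univ : Finset (I n)), avg (w n) (S n) (fun y =>
      if 0 < e * (Real.sigmoid (locField (w n) (S n) s y) - q') then 1 else 0) ≤
      Real.exp (-(c * n)) := by
    intro s _
    refine (avg_mono (w n) (S n) fun y => ?_).trans (h1 s)
    split_ifs with ha hb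
    · exact le_rfl
    · exfalso
      rcases he with rfl | rfl
      · have : Real.sigmoid (locField (w n) (S n) s y) ≤ Real.sigmoid (Λ q + 1 * δ) :=
          Real.sigmoid_le_iff.2 (by linarith)
        linarith
      · have : Real.sigmoid (Λ q + -1 * δ) ≤ Real.sigmoid (locField (w n) (S n) s y) :=
          Real.sigmoid_le_iff.2 (by linarith)
        linarith
    · norm_num
    · exact le_rfl
  refine (Finset.sum_le_sum h3).trans (le_trans ?_ h2)
  rw [Finset.sum_const, nsmul_eq_mul, one_mul]
  gcongr
  exact_mod_cast h.card_index_le n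

lemma MeanField.dominated_near (h : MeanField w S Λ Λ' D C) (hΛ : Continuous Λ) {p : ℝ}
    (hp : p ∈ Set.Icc (0 : ℝ) 1) (huniq : ∀ q, Real.sigmoid (Λ q) = q → q = p) {e : ℝ}
    (he : e = 1 ∨ e = -1) {ε : ℝ} (hε : 0 < ε) :
    ∃ q ∈ Set.Icc (0 : ℝ) 1, |q - p| < ε ∧ Dominated w S e q := by
  have hcont : Continuous fun q => e * (q - Real.sigmoid (Λ q)) := by
    have := continuous_sigmoid
    fun_prop
  set K := {q | q ∈ Set.Icc (0 : ℝ) 1 ∧ ε ≤ e * (q - p)} with hK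
  set q₀ := (1 + e) / 2 with hq₀
  have hq₀I : q₀ ∈ Set.Icc (0 : ℝ) 1 := by
    rcases he with rfl | rfl <;> norm_num [hq₀]
  have hgq₀ : 0 < e * (q₀ - Real.sigmoid (Λ q₀)) := by
    have h1 := Real.sigmoid_lt_one (Λ q₀)
    have h2 := Real.sigmoid_pos (Λ q₀)
    rcases he with rfl | rfl
    · have : q₀ = 1 := by norm_num [hq₀]
      linarith
    · have : q₀ = 0 := by norm_num [hq₀]
      linarith
  by_cases hne : q₀ ∈ K
  swap
  · refine ⟨q₀, hq₀I, ?_, dominated_extremal he⟩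
    have : e * (q₀ - p) < ε := not_le.1 fun hh => hne ⟨hq₀I, hh⟩
    obtain ⟨_, _⟩ := hp
    rw [abs_lt]
    rcases he with rfl | rfl
    · have : q₀ = 1 := by norm_num [hq₀]
      constructor <;> linarith
    · have : q₀ = 0 := by norm_num [hq₀]
      constructor <;> linarith
  have hKc : IsCompact K := by
    refine isCompact_Icc.inter_right (t := {q | ε ≤ e * (q - p)}) (isClosed_le ?_ ?_) <;> fun_prop
  obtain ⟨q₁, hq₁, hmin⟩ := hKc.exists_isMinOn ⟨q₀, hne⟩ hcont.continuousOn
  have hpos : 0 < e * (q₁ - Real.sigmoid (Λ q₁)) := by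
    by_contra! hcon
    obtain ⟨r, hr, hr0⟩ := intermediate_value_uIcc (a := q₁) (b := q₀) hcont.continuousOn
      (Set.mem_uIcc.2 (Or.inl ⟨hcon, hgq₀.le⟩))
    have he0 : e ≠ 0 := by rcases he with rfl | rfl <;> norm_num
    have hrp : r = p := huniq r (by
      have := (mul_eq_zero.1 hr0).resolve_left he0
      linarith)
    obtain ⟨⟨_, _⟩, h3⟩ := hq₁
    have h4 := hne.2
    rcases he with rfl | rfl <;> rcases Set.mem_uIcc.1 hr with h5 | h5 <;> linarith [h5.1, h5.2]
  set δ := min (e * (q₁ - Real.sigmoid (Λ q₁)) / 2) (ε / 2) with hδ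
  have hδ0 : 0 < δ := lt_min (by linarith) (by linarith)
  have hδ1 : δ ≤ e * (q₁ - Real.sigmoid (Λ q₁)) / 2 := min_le_left _ _
  have hδ2 : δ ≤ ε / 2 := min_le_right _ _
  have hee : e * e = 1 := by rcases he with rfl | rfl <;> norm_num
  by_contra hcon
  have key : ∀ k : ℕ, ∃ q ∈ K, Dominated w S e q ∧ e * q = e * q₀ - k * δ := by
    intro k
    induction k with
    | zero => exact ⟨q₀, hne, dominated_extremal he, by simp⟩
    | succ k ih =>
      obtain ⟨q, hqK, hqd, hqe⟩ := ih
      have hm : e * (q₁ - Real.sigmoid (Λ q₁)) ≤ e * (q - Real.sigmoid (Λ q)) := hmin hqK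
      have h1 : ε ≤ e * (q - p) := hqK.2
      have hq'I : q - e * δ ∈ Set.Icc (0 : ℝ) 1 := by
        obtain ⟨⟨_, _⟩, h3⟩ := hqK
        obtain ⟨_, _⟩ := hp
        rcases he with rfl | rfl <;> constructor <;> linarith
      have hq'd : Dominated w S e (q - e * δ) := by
        refine h.dominated_step he hqK.1 hqd hq'I ?_
        have : e * (q - e * δ - Real.sigmoid (Λ q)) = e * (q - Real.sigmoid (Λ q)) - δ := by
          linear_combination (-δ) * hee
        linarith
      refine ⟨q - e * δ, ⟨hq'I, ?_⟩, hq'd, ?_⟩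
      · by_contra! hlt
        refine hcon ⟨_, hq'I, ?_, hq'd⟩
        have h3 : 0 < e * (q - e * δ - p) := by
          have : e * (q - e * δ - p) = e * (q - p) - δ := by linear_combination (-δ) * hee
          linarith
        rw [abs_lt]
        rcases he with rfl | rfl <;> constructor <;> linarith
      · push_cast
        linear_combination hqe - δ * hee
  obtain ⟨k, hk⟩ := exists_nat_gt ((e * (q₀ - p)) / δ)
  obtain ⟨q, hqK, _, hqe⟩ := key k
  rw [div_lt_iff₀ hδ0] at hk
  have := hqK.2
  linarith

/-- All local fields are close to their mean-field values, up to exponentially small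
probability. -/
lemma MeanField.probCompl_goodSet_le (h : MeanField w S Λ Λ' D C) (hΛ : Continuous Λ)
    (hΛ' : Continuous Λ') {p : ℝ} (hp : p ∈ Set.Icc (0 : ℝ) 1)
    (huniq : ∀ q, Real.sigmoid (Λ q) = q → q = p) {ε : ℝ} (hε : 0 < ε) :
    ∃ c > 0, ∀ᶠ n : ℕ in atTop,
      probCompl (w n) (S n) (goodSet (w n) (S n) (Λ p) (Λ' p) ε) ≤ Real.exp (-(c * n)) := by
  have main : ∀ e : ℝ, (e = 1 ∨ e = -1) → ∃ c > 0, ∀ᶠ n : ℕ in atTop, ∀ s,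
      avg (w n) (S n) (fun y => if e * Λ p + ε < e * locField (w n) (S n) s y then 1 else 0) ≤
        Real.exp (-(c * n)) ∧
      avg (w n) (S n) (fun y => if e * Λ' p + ε < e * pairField (w n) (S n) s y then 1 else 0) ≤
        Real.exp (-(c * n)) := by
    intro e he
    obtain ⟨ρ, hρ, hcl⟩ : ∃ ρ > 0, ∀ q, |q - p| < ρ → e * Λ q < e * Λ p + ε ∧
        e * Λ' q < e * Λ' p + ε := by
      have h1 : ∀ᶠ q in 𝓝 p, e * Λ q < e * Λ p + ε ∧ e * Λ' q < e * Λ' p + ε :=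
        ((hΛ.const_mul e).continuousAt.eventually_lt_const (by linarith)).and
          ((hΛ'.const_mul e).continuousAt.eventually_lt_const (by linarith))
      obtain ⟨ρ, hρ, hb⟩ := Metric.eventually_nhds_iff.1 h1
      exact ⟨ρ, hρ, fun q hq => hb (by rwa [Real.dist_eq])⟩
    obtain ⟨q, hq, hqp, hd⟩ := h.dominated_near hΛ hp huniq he hρ
    obtain ⟨c₁, hc₁, h1⟩ := h.tail he hq hd (hcl q hqp).1
    obtain ⟨c₂, hc₂, h2⟩ := h.tail' he hq hd (hcl q hqp).2
    refine ⟨min c₁ c₂, lt_min hc₁ hc₂, ?_⟩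
    filter_upwards [h1, h2] with n h1 h2 s
    refine ⟨(h1 s).trans ?_, (h2 s).trans ?_⟩
    · gcongr; exact min_le_left _ _
    · gcongr; exact min_le_right _ _
  obtain ⟨c₁, hc₁, h1⟩ := main 1 (Or.inl rfl)
  obtain ⟨c₂, hc₂, h2⟩ := main (-1) (Or.inr rfl)
  have hc : 0 < min c₁ c₂ := lt_min hc₁ hc₂
  refine ⟨min c₁ c₂ / 2, half_pos hc, ?_⟩
  filter_upwards [h1, h2, eventually_mul_pow_mul_exp_le 4 2 hc] with n h1 h2 h3
  classical
  have b1 : Real.exp (-(c₁ * n)) ≤ Real.exp (-(min c₁ c₂ * n)) := by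
    gcongr; exact min_le_left _ _
  have b2 : Real.exp (-(c₂ * n)) ≤ Real.exp (-(min c₁ c₂ * n)) := by
    gcongr; exact min_le_right _ _
  refine le_trans ?_ h3
  set f : ℝ → ℝ → ((I n → Bool) → ℝ) → (I n → Bool) → ℝ :=
    fun e r F y => if e * r + ε < e * F y then (1 : ℝ) else 0 with hf
  have f0 : ∀ e r F y, 0 ≤ f e r F y := fun e r F y => by simp only [hf]; split_ifs <;> norm_num
  have hle : ∀ r (F : (I n → Bool) → ℝ) y, F y ∉ Set.Icc (r - ε) (r + ε) →
      1 ≤ f 1 r F y + f (-1) r F y := by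
    intro r F y hy
    by_cases hlt : r + ε < F y
    · have : f 1 r F y = 1 := by simp only [hf]; rw [if_pos (by linarith)]
      linarith [f0 (-1) r F y]
    · have hlt2 : F y < r - ε := by
        by_contra! hcon
        exact hy ⟨hcon, not_lt.1 hlt⟩
      have : f (-1) r F y = 1 := by simp only [hf]; rw [if_pos (by linarith)]
      linarith [f0 1 r F y]
  set g : I n → (I n → Bool) → ℝ := fun s y =>
    (f 1 (Λ p) (locField (w n) (S n) s) y + f (-1) (Λ p) (locField (w n) (S n) s) y) +
    (f 1 (Λ' p) (pairField (w n) (S n) s) y + f (-1) (Λ' p) (pairField (w n) (S n) s) y) with hg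
  have g0 : ∀ s y, 0 ≤ g s y := fun s y =>
    add_nonneg (add_nonneg (f0 _ _ _ _) (f0 _ _ _ _)) (add_nonneg (f0 _ _ _ _) (f0 _ _ _ _))
  have hunion : probCompl (w n) (S n) (goodSet (w n) (S n) (Λ p) (Λ' p) ε) ≤
      avg (w n) (S n) (fun y => ∑ s, g s y) := by
    unfold probCompl
    refine avg_mono (w n) (S n) fun y => ?_
    split_ifs with hy
    · exact Finset.sum_nonneg fun s _ => g0 s y
    · simp only [goodSet, Set.mem_ofPred_eq, not_forall] at hy
      obtain ⟨s, hs⟩ := hy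
      refine le_trans ?_ (Finset.single_le_sum (fun s _ => g0 s y) (Finset.mem_univ s))
      by_cases hL : locField (w n) (S n) s y ∈ Set.Icc (Λ p - ε) (Λ p + ε)
      · have := hle _ _ y fun hM => hs ⟨hL, hM⟩
        linarith [f0 1 (Λ p) (locField (w n) (S n) s) y, f0 (-1) (Λ p) (locField (w n) (S n) s) y]
      · have := hle _ _ y hL
        linarith [f0 1 (Λ' p) (pairField (w n) (S n) s) y,
          f0 (-1) (Λ' p) (pairField (w n) (S n) s) y]
  refine hunion.trans ?_
  rw [avg_sum]
  have hterm : ∀ s ∈ (univ : Finset (I n)), avg (w n) (S n) (g s) ≤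
      4 * Real.exp (-(min c₁ c₂ * n)) := by
    intro s _
    simp only [hg]
    rw [avg_add, avg_add, avg_add]
    have e1 := (h1 s).1
    have e2 := (h1 s).2
    have e3 := (h2 s).1
    have e4 := (h2 s).2
    simp only [hf]
    linarith
  refine (Finset.sum_le_sum hterm).trans ?_
  rw [Finset.sum_const, nsmul_eq_mul, mul_comm 4 ((n : ℝ) ^ 2), mul_assoc ((n : ℝ) ^ 2)]
  have : (Fintype.card (I n) : ℝ) ≤ (n : ℝ) ^ 2 := by exact_mod_cast h.card_index_le n
  exact mul_le_mul_of_nonneg_right this (by positivity)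

end MeanField

section CentralLimit

open Filter Topology

lemma avg_sub_mean_mul {J A : Type} [DecidableEq J] [Fintype J] [Fintype A] (w : A → ℝ)
    (S : A → Finset J) (F G : (J → Bool) → ℝ) :
    avg w S (fun y => (F y - avg w S F) * G y) = cov w S F G := by
  have h : (fun y => (F y - avg w S F) * G y) = fun y => F y * G y - avg w S F * G y := by
    funext y; ring
  rw [h, avg_sub, avg_const_mul]
  rfl

variable {I A : ℕ → Type} [∀ n, Fintype (I n)] [∀ n, DecidableEq (I n)] [∀ n, Fintype (A n)]
variable {w : ∀ n, A n → ℝ} {S : ∀ n, A n → Finset (I n)} {Λ Λ' : ℝ → ℝ} {D : ℕ} {C : ℝ}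

lemma probCompl_nonneg {J A : Type} [DecidableEq J] [Fintype J] [Fintype A] (w : A → ℝ)
    (S : A → Finset J) (K : Set (J → Bool)) : 0 ≤ probCompl w S K := by
  classical
  unfold probCompl
  refine (avg_const w S 0).symm.le.trans (avg_mono w S fun y => ?_)
  split_ifs <;> norm_num

/-- Covariances with the total are asymptotically proportional to the averaged gradient,
uniformly over increasing functions of polynomial size. -/
lemma MeanField.abs_cov_sub_le (h : MeanField w S Λ Λ' D C) (hΛ : Continuous Λ)
    (hΛ' : Continuous Λ') {p : ℝ} (hp : p ∈ Set.Ioo (0 : ℝ) 1)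
    (hfix : Real.sigmoid (Λ p) = p) (huniq : ∀ q, Real.sigmoid (Λ q) = q → q = p) {ω : ℝ}
    (hω : 0 < ω) (K : ℝ) (m : ℕ) :
    ∀ᶠ n : ℕ in atTop, ∀ G : (I n → Bool) → ℝ, Monotone G → (∀ y, |G y| ≤ K * n ^ m) →
      |(1 - p * (1 - p) * Λ' p) * cov (w n) (S n) total G -
        p * (1 - p) * avgGrad (w n) (S n) G| ≤
      ω * (cov (w n) (S n) total G + avgGrad (w n) (S n) G) + ω := by
  obtain ⟨hp0, hp1⟩ := hp
  have hv : 0 ≤ p * (1 - p) := by nlinarith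
  have hv1 : p * (1 - p) ≤ 1 := by nlinarith
  set v := p * (1 - p) with hvdef
  set b := Λ' p with hb
  set δ := min ω (ω / (2 * (|b| + 1))) with hδ
  have hb1 : 0 < |b| + 1 := by positivity
  have hδ0 : 0 < δ := lt_min hω (by positivity)
  have hδω : δ ≤ ω := min_le_left _ _
  have hδb : δ * (|b| + 1) ≤ ω / 2 := by
    have : δ ≤ ω / (2 * (|b| + 1)) := min_le_right _ _
    rw [le_div_iff₀ (by positivity)] at this
    linarith
  obtain ⟨ρ, hρ, hcl⟩ : ∃ ρ > 0, ∀ x, |x - Λ p| < ρ →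
      |Real.sigmoid x * (1 - Real.sigmoid x) - v| < δ := by
    have hc : ContinuousAt (fun x => Real.sigmoid x * (1 - Real.sigmoid x)) (Λ p) := by
      have := continuous_sigmoid
      fun_prop
    obtain ⟨ρ, hρ, hh⟩ := Metric.continuousAt_iff.1 hc δ hδ0
    refine ⟨ρ, hρ, fun x hx => ?_⟩
    have := hh (x := x) (by rwa [Real.dist_eq])
    rwa [hfix, Real.dist_eq] at this
  set ε := min (min (ρ / 2) (ω / 2)) 1 with hε
  have hε0 : 0 < ε := lt_min (lt_min (by linarith) (by linarith)) one_pos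
  have hε1 : ε ≤ 1 := min_le_right _ _
  have hε2 : ε ≤ ρ / 2 := (min_le_left _ _).trans (min_le_left _ _)
  have hε3 : ε ≤ ω / 2 := (min_le_left _ _).trans (min_le_right _ _)
  obtain ⟨c, hc, hgood⟩ := h.probCompl_goodSet_le hΛ hΛ' (p := p) ⟨hp0.le, hp1.le⟩ huniq hε0
  have herr := eventually_mul_pow_mul_exp_le
    ((4 * (|v * b| + ω + 1) + 2) * |K|) (2 + m) hc
  have hsmall : ∀ᶠ n : ℕ in atTop, Real.exp (-(c / 2 * n)) ≤ ω := by
    have h1 : Tendsto (fun n : ℕ => c / 2 * (n : ℝ)) atTop atTop :=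
      tendsto_natCast_atTop_atTop.const_mul_atTop (half_pos hc)
    exact (Real.tendsto_exp_neg_atTop_nhds_zero.comp h1).eventually_le_const hω
  filter_upwards [hgood, herr, hsmall] with n hgood herr hsmall G hG hB
  have hB' : ∀ y, |G y| ≤ |K| * n ^ m := fun y =>
    (hB y).trans (mul_le_mul_of_nonneg_right (le_abs_self K) (by positivity))
  refine (abs_cov_total_sub_le (h.ferro n) (a := Λ p) (b := b) (ε := ε) hv hδ0.le hδω
    (fun x hx => (hcl x ?_).le) ?_ hv1 hG hB').trans (add_le_add_right ?_ _)
  · rw [abs_lt]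
    constructor <;> linarith [hx.1, hx.2]
  · nlinarith [le_abs_self b]
  · have hcard : (Fintype.card (I n) : ℝ) ≤ (n : ℝ) ^ 2 := by
      exact_mod_cast h.card_index_le n
    calc _ = ((4 * (|v * b| + ω + 1) + 2) * |K|) * (Fintype.card (I n) * (n : ℝ) ^ m) *
            probCompl (w n) (S n) (goodSet (w n) (S n) (Λ p) b ε) := by ring
      _ ≤ ((4 * (|v * b| + ω + 1) + 2) * |K|) * ((n : ℝ) ^ 2 * (n : ℝ) ^ m) *
            Real.exp (-(c * n)) := by
          gcongr
          exact probCompl_nonneg _ _ _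
      _ ≤ ω := by
          rw [← pow_add]
          exact herr.trans hsmall

/-- The total, centred and divided by `r`. -/
def scaledTotal {J A : Type} [DecidableEq J] [Fintype J] [Fintype A] (w : A → ℝ)
    (S : A → Finset J) (r : ℝ) (y : J → Bool) : ℝ := (total y - avg w S total) / r

lemma avg_scaledTotal_mul {J A : Type} [DecidableEq J] [Fintype J] [Fintype A] (w : A → ℝ)
    (S : A → Finset J) {r : ℝ} (hr : 0 < r) (G : (J → Bool) → ℝ) :
    r * avg w S (fun y => scaledTotal w S r y * G y) = cov w S total G := by
  rw [← avg_sub_mean_mul, ← avg_const_mul]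
  congr 1
  funext y
  unfold scaledTotal
  field_simp

lemma scaledTotal_update {J A : Type} [DecidableEq J] [Fintype J] [Fintype A] (w : A → ℝ)
    (S : A → Finset J) (r : ℝ) (y : J → Bool) (s : J) :
    scaledTotal w S r (Function.update y s true) =
      scaledTotal w S r (Function.update y s false) + 1 / r := by
  unfold scaledTotal
  rw [total_update]
  ring

lemma monotone_of_update {J : Type} [DecidableEq J] [Fintype J] {G : (J → Bool) → ℝ}
    (h : ∀ y s, G (Function.update y s false) ≤ G (Function.update y s true)) : Monotone G := by
  rw [← monotoneOn_univ]
  exact monotoneOn_of_update Set.ordConnected_univ fun y s _ _ => h y s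

lemma abs_scaledTotal_le {J A : Type} [DecidableEq J] [Fintype J] [Fintype A] (w : A → ℝ)
    (S : A → Finset J) {r : ℝ} (hr : 1 ≤ r) (y : J → Bool) :
    |scaledTotal w S r y| ≤ 2 * Fintype.card J := by
  unfold scaledTotal
  have h1 : |avg w S total| ≤ Fintype.card J :=
    (abs_avg_le w S abs_total_le).trans_eq (avg_const w S _)
  have h2 := abs_total_le y
  rw [abs_div, abs_of_pos (by linarith : 0 < r)]
  refine (div_le_self (abs_nonneg _) hr).trans ?_
  have := abs_sub (total y) (avg w S total)
  linarith

lemma MeanField.abs_variance_sub_le (h : MeanField w S Λ Λ' D C) (hΛ : Continuous Λ)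
    (hΛ' : Continuous Λ') {p : ℝ} (hp : p ∈ Set.Ioo (0 : ℝ) 1)
    (hfix : Real.sigmoid (Λ p) = p) (huniq : ∀ q, Real.sigmoid (Λ q) = q → q = p)
    (hsub : p * (1 - p) * Λ' p < 1) {r : ℕ → ℝ} (hr : Tendsto r atTop atTop)
    (hrsq : ∀ᶠ n in atTop, (1 - p * (1 - p) * Λ' p) * r n ^ 2 =
      p * (1 - p) * Fintype.card (I n)) {η : ℝ} (hη : 0 < η) :
    ∀ᶠ n : ℕ in atTop,
      |avg (w n) (S n) (fun y => scaledTotal (w n) (S n) (r n) y ^ 2) - 1| ≤ η := by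
  have hv : 0 < p * (1 - p) := mul_pos hp.1 (sub_pos.2 hp.2)
  set v := p * (1 - p) with hvdef
  set u := 1 - v * Λ' p with hu
  have hu0 : 0 < u := by linarith
  set M := 2 + u / v with hM
  have hM0 : 0 < M := by positivity
  set ω := min (u / 2) (η * u / (2 * M)) with hω
  have hω0 : 0 < ω := lt_min (by positivity) (by positivity)
  have hω1 : ω ≤ u / 2 := min_le_left _ _
  have hω2 : ω * M ≤ η * u / 2 := by
    have : ω ≤ η * u / (2 * M) := min_le_right _ _
    rw [le_div_iff₀ (by positivity)] at this
    linarith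
  filter_upwards [h.abs_cov_sub_le hΛ hΛ' hp hfix huniq hω0 1 2, hr.eventually_ge_atTop 1, hrsq]
    with n h1 hr1 hrn
  have hr0 : 0 < r n := by linarith
  have hcard : (Fintype.card (I n) : ℝ) ≤ (n : ℝ) ^ 2 := by
    exact_mod_cast h.card_index_le n
  have h2 := h1 total total_monotone fun y => by
    rw [one_mul]; exact (abs_total_le y).trans hcard
  have hgrad : avgGrad (w n) (S n) total = Fintype.card (I n) := by
    unfold avgGrad
    have : ∀ s : I n, avg (w n) (S n) (fun y => total (Function.update y s true) -
        total (Function.update y s false)) = 1 := fun s => by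
      simp only [total_update, add_sub_cancel_left]
      exact avg_const (w n) (S n) 1
    simp [this]
  set x := avg (w n) (S n) (fun y => scaledTotal (w n) (S n) (r n) y ^ 2) with hx
  have hcov : cov (w n) (S n) total total = r n ^ 2 * x := by
    rw [← avg_sub_mean_mul, hx, ← avg_const_mul]
    have e1 : (fun y : I n → Bool => (total y - avg (w n) (S n) total) * total y) =
        fun y => (total y - avg (w n) (S n) total) ^ 2 +
          avg (w n) (S n) total * (total y - avg (w n) (S n) total) := by
      funext y; ring
    have e2 : avg (w n) (S n) (fun y => total y - avg (w n) (S n) total) = 0 := by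
      rw [avg_sub, avg_const, sub_self]
    rw [e1, avg_add, avg_const_mul, e2, mul_zero, add_zero]
    congr 1
    funext y
    unfold scaledTotal
    field_simp
  rw [hgrad, hcov, ← hrn] at h2
  have hN : (Fintype.card (I n) : ℝ) = u / v * r n ^ 2 := by
    field_simp
    linarith
  rw [hN] at h2
  have e3 : u * (r n ^ 2 * x) - u * r n ^ 2 = r n ^ 2 * (u * (x - 1)) := by ring
  rw [e3, abs_mul, abs_of_nonneg (sq_nonneg (r n)), abs_mul, abs_of_pos hu0] at h2
  have hr2 : 1 ≤ r n ^ 2 := one_le_pow₀ hr1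
  have h3 : u * |x - 1| ≤ ω * (x + u / v + 1) := by
    refine le_of_mul_le_mul_left (a := r n ^ 2) ?_ (by positivity)
    nlinarith
  have h4 := le_abs_self (x - 1)
  have h5 : (u / 2) * |x - 1| ≤ u / 2 * η := by
    have h6 : ω * (x + u / v + 1) ≤ ω * M + ω * |x - 1| := by
      rw [hM, ← mul_add]
      exact mul_le_mul_of_nonneg_left (by linarith) hω0.le
    have h7 := mul_le_mul_of_nonneg_right hω1 (abs_nonneg (x - 1))
    linarith
  exact le_of_mul_le_mul_left h5 (by positivity)

lemma abs_sin_add_sub_le {a d h z : ℝ} (hz : z = a ∨ z = a + h) (hd : d = h) :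
    |Real.sin (a + h) - Real.sin a - d * Real.cos z| ≤ h ^ 2 := by
  subst hd
  have hmem : z ∈ Set.uIcc a (a + d) := by
    rcases hz with rfl | rfl
    · exact Set.left_mem_uIcc
    · exact Set.right_mem_uIcc
  have key := (convex_uIcc a (a + d)).norm_image_sub_le_of_norm_hasDerivWithin_le
    (f := fun x => Real.sin x - Real.cos z * x) (f' := fun x => Real.cos x - Real.cos z)
    (C := |d|)
    (fun x _ => by
      have := (Real.hasDerivAt_sin x).fun_sub ((hasDerivAt_id' x).const_mul (Real.cos z))
      rw [mul_one] at this
      exact this.hasDerivWithinAt)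
    (fun x hx => by
      rw [Real.norm_eq_abs]
      have h1 : |Real.cos x - Real.cos z| ≤ |x - z| := Real.abs_cos_sub_cos_le x z
      have h2 := Set.abs_sub_le_of_uIcc_subset_uIcc (Set.uIcc_subset_uIcc hmem hx)
      rw [add_sub_cancel_left] at h2
      exact h1.trans h2)
    Set.left_mem_uIcc Set.right_mem_uIcc
  rw [Real.norm_eq_abs, Real.norm_eq_abs, add_sub_cancel_left, abs_mul_abs_self, ← sq] at key
  refine le_trans (le_of_eq ?_) key
  congr 1
  ring

set_option maxHeartbeats 1000000 in
/-- The approximate Stein equation for trigonometric test functions. -/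
lemma MeanField.abs_stein_le (h : MeanField w S Λ Λ' D C) (hΛ : Continuous Λ)
    (hΛ' : Continuous Λ') {p : ℝ} (hp : p ∈ Set.Ioo (0 : ℝ) 1)
    (hfix : Real.sigmoid (Λ p) = p) (huniq : ∀ q, Real.sigmoid (Λ q) = q → q = p)
    (hsub : p * (1 - p) * Λ' p < 1) {r : ℕ → ℝ} (hr : Tendsto r atTop atTop)
    (hrsq : ∀ᶠ n in atTop, (1 - p * (1 - p) * Λ' p) * r n ^ 2 =
      p * (1 - p) * Fintype.card (I n)) {T : ℝ} (hT : 0 < T) {η : ℝ} (hη : 0 < η) :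
    ∀ᶠ n : ℕ in atTop, ∀ t θ : ℝ, |t| ≤ T →
      |avg (w n) (S n) (fun y => scaledTotal (w n) (S n) (r n) y *
          Real.sin (t * scaledTotal (w n) (S n) (r n) y + θ)) -
        t * avg (w n) (S n) (fun y => Real.cos (t * scaledTotal (w n) (S n) (r n) y + θ))| ≤ η := by
  have hvar := h.abs_variance_sub_le hΛ hΛ' hp hfix huniq hsub hr hrsq
    (η := min (η / (3 * T)) 1) (lt_min (by positivity) one_pos)
  have hv : 0 < p * (1 - p) := mul_pos hp.1 (sub_pos.2 hp.2)
  set v := p * (1 - p) with hvdef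
  set u := 1 - v * Λ' p with hu
  have hu0 : 0 < u := by linarith
  set M := 2 * T + 3 / 2 + 2 * T * (u / v) + 1 with hM
  have hM0 : 0 < M := by positivity
  have hω0 : 0 < u * η / (3 * M) := by positivity
  set ω := u * η / (3 * M) with hω
  have hωM : ω * M = u * (η / 3) := by rw [hω]; field_simp
  filter_upwards [h.abs_cov_sub_le hΛ hΛ' hp hfix huniq hω0 (2 * T + 1) 2,
    hr.eventually_ge_atTop 1, hr.eventually_ge_atTop (3 * T ^ 2 / η), hrsq, hvar,
    eventually_ge_atTop 1] with n h1 hr1 hrT hrn hx hn t θ ht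
  have hr0 : 0 < r n := by linarith
  have hN : (Fintype.card (I n) : ℝ) = u / v * r n ^ 2 := by
    field_simp
    linarith
  have hcard : (Fintype.card (I n) : ℝ) ≤ (n : ℝ) ^ 2 := by
    exact_mod_cast h.card_index_le n
  set W := scaledTotal (w n) (S n) (r n) with hW
  set E := avg (w n) (S n) with hE
  set x := E (fun y => W y ^ 2) with hxdef
  set s := E (fun y => W y * Real.sin (t * W y + θ)) with hs
  set c := E (fun y => Real.cos (t * W y + θ)) with hc
  set G : (I n → Bool) → ℝ := fun y => T * W y + Real.sin (t * W y + θ) with hG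
  have htr : |t * (1 / r n)| ≤ T * (1 / r n) := by
    rw [abs_mul, abs_of_pos (by positivity : 0 < 1 / r n)]
    gcongr
  have hsq : (t * (1 / r n)) ^ 2 ≤ (T * (1 / r n)) ^ 2 := sq_le_sq.2 (htr.trans (le_abs_self _))
  have hWup : ∀ y s, W (Function.update y s true) = W (Function.update y s false) + 1 / r n :=
    scaledTotal_update _ _ _
  have hargs : ∀ y s, t * W (Function.update y s true) + θ =
      (t * W (Function.update y s false) + θ) + t * (1 / r n) := fun y s => by
    rw [hWup]; ring
  have hGup : ∀ y s, |G (Function.update y s true) - G (Function.update y s false) -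
      T * (1 / r n)| ≤ T * (1 / r n) := by
    intro y s
    have e1 := Real.abs_sin_sub_sin_le (t * W (Function.update y s true) + θ)
      (t * W (Function.update y s false) + θ)
    simp only [hG]
    rw [hargs, add_sub_cancel_left] at e1
    rw [hargs, hWup]
    refine le_trans (le_of_eq ?_) (e1.trans htr)
    congr 1
    ring
  have hGm : Monotone G := monotone_of_update fun y s => by
    have := (abs_le.1 (hGup y s)).1
    linarith
  have hGB : ∀ y, |G y| ≤ (2 * T + 1) * n ^ 2 := fun y => by
    have e1 : |W y| ≤ 2 * Fintype.card (I n) := abs_scaledTotal_le _ _ hr1 y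
    have e2 := Real.abs_sin_le_one (t * W y + θ)
    have e3 := abs_add_le (T * W y) (Real.sin (t * W y + θ))
    rw [abs_mul, abs_of_pos hT] at e3
    have e4 : (1 : ℝ) ≤ (n : ℝ) ^ 2 := one_le_pow₀ (by exact_mod_cast hn)
    nlinarith
  have h2 := h1 G hGm hGB
  have hcov : cov (w n) (S n) total G = r n * (T * x + s) := by
    rw [← avg_scaledTotal_mul _ _ hr0 G]
    congr 1
    rw [hxdef, hs, ← avg_const_mul, ← avg_add]
    congr 1
    funext y
    simp only [hG]
    ring
  set N : ℝ := (Fintype.card (I n) : ℝ) with hNdef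
  have hgrad0 : avgGrad (w n) (S n) G ≤ 2 * T * (u / v) * r n := by
    have e1 : ∀ s ∈ (univ : Finset (I n)), E (fun y => G (Function.update y s true) -
        G (Function.update y s false)) ≤ 2 * T * (1 / r n) := fun s _ => by
      refine (avg_mono _ _ fun y => ?_).trans_eq (avg_const _ _ (2 * T * (1 / r n)))
      linarith [(abs_le.1 (hGup y s)).2]
    refine (Finset.sum_le_sum e1).trans_eq ?_
    rw [Finset.sum_const, nsmul_eq_mul, Finset.card_univ, ← hNdef, hN]
    field_simp
  have hgrad1 : |avgGrad (w n) (S n) G - u / v * r n * (T + t * c)| ≤ u / v * T ^ 2 := by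
    have e0 : u / v * r n * (T + t * c) = ∑ s : I n, E (fun y => T * (1 / r n) +
        t * (1 / r n) * Real.cos (t * W y + θ)) := by
      have e1 : E (fun y => T * (1 / r n) + t * (1 / r n) * Real.cos (t * W y + θ)) =
          T * (1 / r n) + t * (1 / r n) * c := by
        rw [hE, avg_add, avg_const, avg_const_mul]
      rw [Finset.sum_const, nsmul_eq_mul, Finset.card_univ, ← hNdef, hN, e1]
      field_simp
    rw [e0]
    unfold avgGrad
    rw [← Finset.sum_sub_distrib]
    have e1 : ∀ s ∈ (univ : Finset (I n)), |E (fun y => G (Function.update y s true) -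
        G (Function.update y s false)) - E (fun y => T * (1 / r n) +
        t * (1 / r n) * Real.cos (t * W y + θ))| ≤ (T * (1 / r n)) ^ 2 := fun s _ => by
      rw [hE, ← avg_sub]
      refine (abs_avg_le _ _ fun y => ?_).trans_eq (avg_const _ _ ((T * (1 / r n)) ^ 2))
      refine le_trans (le_of_eq ?_) ((abs_sin_add_sub_le (a := t * W (Function.update y s false) + θ)
        (h := t * (1 / r n)) (z := t * W y + θ) ?_ rfl).trans hsq)
      · simp only [hG]
        rw [hargs, hWup]
        congr 1
        ring
      · cases hb : y s
        · left; rw [← hb, Function.update_eq_self]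
        · right
          rw [← hargs, ← hb, Function.update_eq_self]
    refine (Finset.abs_sum_le_sum_abs _ _).trans ((Finset.sum_le_sum e1).trans_eq ?_)
    rw [Finset.sum_const, nsmul_eq_mul, Finset.card_univ, ← hNdef, hN]
    field_simp
  have hx1 := (le_min_iff.1 hx).1
  have hx2 := abs_le.1 (le_min_iff.1 hx).2
  have hs1 : s ≤ (1 + x) / 2 := by
    have : (1 + x) / 2 = E (fun y => 1 / 2 + 1 / 2 * W y ^ 2) := by
      have e1 : E (fun y => 1 / 2 + 1 / 2 * W y ^ 2) = 1 / 2 + 1 / 2 * x := by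
        rw [hE, avg_add, avg_const, avg_const_mul]
      rw [e1]
      ring
    rw [this]
    refine avg_mono _ _ fun y => ?_
    have e1 := Real.neg_one_le_sin (t * W y + θ)
    have e2 := Real.sin_le_one (t * W y + θ)
    nlinarith [sq_nonneg (W y - Real.sin (t * W y + θ))]
  rw [hcov] at h2
  have h3 : |v * avgGrad (w n) (S n) G - u * r n * (T + t * c)| ≤ u * T ^ 2 := by
    have e1 := mul_le_mul_of_nonneg_left hgrad1 hv.le
    rw [← abs_of_pos hv, ← abs_mul, abs_of_pos hv] at e1
    refine le_trans (le_of_eq ?_) (e1.trans_eq ?_)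
    · congr 1
      field_simp
    · field_simp
  have h4 : r n * (u * |T * (x - 1) + (s - t * c)|) ≤ u * T ^ 2 +
      r n * (ω * M) := by
    have e1 : r n * (u * |T * (x - 1) + (s - t * c)|) =
        |u * (r n * (T * x + s)) - u * r n * (T + t * c)| := by
      rw [← abs_of_pos hr0, ← abs_of_pos hu0, ← abs_mul, ← abs_mul, abs_of_pos hr0, abs_of_pos hu0]
      congr 1
      ring
    rw [e1]
    have e2 := abs_add_le (u * (r n * (T * x + s)) - v * avgGrad (w n) (S n) G)
      (v * avgGrad (w n) (S n) G - u * r n * (T + t * c))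
    rw [sub_add_sub_cancel] at e2
    have e3 : r n * (T * x + s) + avgGrad (w n) (S n) G + 1 ≤ r n * M := by
      have : T * x ≤ T * 2 := mul_le_mul_of_nonneg_left (by linarith) hT.le
      have : T * x + s ≤ 2 * T + 3 / 2 := by linarith
      have := mul_le_mul_of_nonneg_left this hr0.le
      have e4 : r n * M = r n * (2 * T + 3 / 2) + 2 * T * (u / v) * r n + r n := by
        rw [hM]; ring
      linarith
    have := mul_le_mul_of_nonneg_left e3 hω0.le
    linarith
  have h5 : u * T ^ 2 ≤ r n * (u * (η / 3)) := by
    rw [div_le_iff₀ hη] at hrT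
    have e1 := mul_le_mul_of_nonneg_left hrT hu0.le
    linarith
  rw [hωM] at h4
  have h6 : |T * (x - 1) + (s - t * c)| ≤ η / 3 + η / 3 := by
    refine le_of_mul_le_mul_left (a := r n * u) ?_ (by positivity)
    linarith
  have h7 : T * |x - 1| ≤ η / 3 := by
    rw [le_div_iff₀ (by positivity)] at hx1
    linarith
  have h8 := abs_sub (T * (x - 1) + (s - t * c)) (T * (x - 1))
  rw [add_sub_cancel_left, abs_mul, abs_of_pos hT] at h8
  linarith

end CentralLimit

section WeakLimit

open Filter Topology

lemma abs_sub_mul_exp_le {f f' : ℝ → ℝ} {T η t : ℝ} (hf : ∀ x, HasDerivAt f (f' x) x)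
    (h : ∀ x, |x| ≤ T → |f' x + x * f x| ≤ η) (ht : |t| ≤ T) :
    |f t - f 0 * Real.exp (-(t ^ 2 / 2))| ≤ η * (Real.exp (T ^ 2 / 2) * T) := by
  have hη : 0 ≤ η := (abs_nonneg _).trans (h t ht)
  have hT : 0 ≤ T := (abs_nonneg _).trans ht
  have hg : ∀ x, HasDerivAt (fun x => Real.exp (x ^ 2 / 2) * f x)
      (Real.exp (x ^ 2 / 2) * (f' x + x * f x)) x := by
    intro x
    have h1 : HasDerivAt (fun x : ℝ => x ^ 2 / 2) x x := by
      have := (hasDerivAt_pow 2 x).div_const 2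
      simpa using this
    refine (h1.exp.mul (hf x)).congr_deriv ?_
    ring
  have key := (convex_Icc (-T) T).norm_image_sub_le_of_norm_hasDerivWithin_le
    (C := Real.exp (T ^ 2 / 2) * η) (fun x _ => (hg x).hasDerivWithinAt)
    (fun x hx => by
      have hx' : |x| ≤ T := abs_le.2 hx
      rw [Real.norm_eq_abs, abs_mul, abs_of_pos (Real.exp_pos _)]
      have : x ^ 2 ≤ T ^ 2 := sq_le_sq.2 (hx'.trans (le_abs_self T))
      gcongr
      exact h x hx')
    (x := 0) (y := t) ⟨by linarith, hT⟩ (abs_le.1 ht)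
  rw [Real.norm_eq_abs, Real.norm_eq_abs, sub_zero] at key
  have e1 : f t - f 0 * Real.exp (-(t ^ 2 / 2)) = Real.exp (-(t ^ 2 / 2)) *
      (Real.exp (t ^ 2 / 2) * f t - Real.exp (0 ^ 2 / 2) * f 0) := by
    rw [mul_sub, ← mul_assoc, ← Real.exp_add]
    simp
    ring
  rw [e1, abs_mul, abs_of_pos (Real.exp_pos _)]
  have e2 : Real.exp (-(t ^ 2 / 2)) ≤ 1 := Real.exp_le_one_iff.2 (by nlinarith [sq_nonneg t])
  refine (mul_le_of_le_one_left (abs_nonneg _) e2).trans (key.trans ?_)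
  rw [mul_comm (Real.exp _) η, mul_assoc]
  gcongr

variable {J A : Type} [DecidableEq J] [Fintype J] [Fintype A]

lemma hasDerivAt_avg_cos (w : A → ℝ) (S : A → Finset J) (W : (J → Bool) → ℝ) (θ t : ℝ) :
    HasDerivAt (fun t => avg w S fun y => Real.cos (t * W y + θ))
      (-avg w S fun y => W y * Real.sin (t * W y + θ)) t := by
  unfold avg
  rw [← Finset.sum_neg_distrib]
  refine HasDerivAt.fun_sum fun y _ => ?_
  have h1 : HasDerivAt (fun t => t * W y + θ) (W y) t := by
    simpa using ((hasDerivAt_id' t).mul_const (W y)).add_const θ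
  refine (h1.cos.const_mul (gibbs w S y)).congr_deriv ?_
  ring

/-- The law of a function under the Gibbs distribution. -/
def gibbsLaw (w : A → ℝ) (S : A → Finset J) (W : (J → Bool) → ℝ) : Measure ℝ :=
  ∑ y, ENNReal.ofReal (gibbs w S y) • Measure.dirac (W y)

instance (w : A → ℝ) (S : A → Finset J) (W : (J → Bool) → ℝ) :
    IsProbabilityMeasure (gibbsLaw w S W) := by
  refine ⟨?_⟩
  unfold gibbsLaw
  simp only [Measure.coe_finsetSum, Finset.sum_apply, Measure.smul_apply, measure_univ,
    smul_eq_mul, mul_one]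
  rw [← ENNReal.ofReal_sum_of_nonneg fun y _ => (gibbs_pos w S y).le, sum_gibbs,
    ENNReal.ofReal_one]

lemma integral_gibbsLaw {E : Type} [NormedAddCommGroup E] [NormedSpace ℝ E] [CompleteSpace E]
    (w : A → ℝ) (S : A → Finset J) (W : (J → Bool) → ℝ) (ψ : ℝ → E) :
    ∫ x, ψ x ∂gibbsLaw w S W = ∑ y, gibbs w S y • ψ (W y) := by
  unfold gibbsLaw
  rw [integral_finsetSum_measure fun y _ =>
    (integrable_dirac (by finiteness)).smul_measure ENNReal.ofReal_ne_top]
  refine Finset.sum_congr rfl fun y _ => ?_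
  rw [integral_smul_measure, integral_dirac, ENNReal.toReal_ofReal (gibbs_pos w S y).le]

lemma charFun_gibbsLaw (w : A → ℝ) (S : A → Finset J) (W : (J → Bool) → ℝ) (t : ℝ) :
    charFun (gibbsLaw w S W) t =
      (avg w S fun y => Real.cos (t * W y + 0) : ℝ) -
        (avg w S fun y => Real.cos (t * W y + Real.pi / 2) : ℝ) * Complex.I := by
  rw [charFun_apply_real, integral_gibbsLaw]
  unfold avg
  push_cast
  rw [Finset.sum_mul, ← Finset.sum_sub_distrib]
  refine Finset.sum_congr rfl fun y _ => ?_
  rw [Complex.cos_add_pi_div_two, add_zero, Complex.exp_mul_I, Complex.real_smul]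
  ring

variable {I B : ℕ → Type} [∀ n, Fintype (I n)] [∀ n, DecidableEq (I n)] [∀ n, Fintype (B n)]
variable {w : ∀ n, B n → ℝ} {S : ∀ n, B n → Finset (I n)} {Λ Λ' : ℝ → ℝ} {D : ℕ} {C : ℝ}

lemma MeanField.tendsto_avg_cos (h : MeanField w S Λ Λ' D C) (hΛ : Continuous Λ)
    (hΛ' : Continuous Λ') {p : ℝ} (hp : p ∈ Set.Ioo (0 : ℝ) 1)
    (hfix : Real.sigmoid (Λ p) = p) (huniq : ∀ q, Real.sigmoid (Λ q) = q → q = p)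
    (hsub : p * (1 - p) * Λ' p < 1) {r : ℕ → ℝ} (hr : Tendsto r atTop atTop)
    (hrsq : ∀ᶠ n in atTop, (1 - p * (1 - p) * Λ' p) * r n ^ 2 =
      p * (1 - p) * Fintype.card (I n)) (t θ : ℝ) :
    Tendsto (fun n => avg (w n) (S n) fun y =>
      Real.cos (t * scaledTotal (w n) (S n) (r n) y + θ)) atTop
      (𝓝 (Real.cos θ * Real.exp (-(t ^ 2 / 2)))) := by
  rw [Metric.tendsto_nhds]
  intro ε hε
  set T := |t| + 1 with hT
  have hT0 : 0 < T := by positivity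
  have hM : 0 < Real.exp (T ^ 2 / 2) * T := by positivity
  filter_upwards [h.abs_stein_le hΛ hΛ' hp hfix huniq hsub hr hrsq hT0
    (η := ε / 2 / (Real.exp (T ^ 2 / 2) * T)) (by positivity)] with n hn
  have := abs_sub_mul_exp_le (t := t)
    (hasDerivAt_avg_cos (w n) (S n) (scaledTotal (w n) (S n) (r n)) θ)
    (fun x hx => by
      rw [neg_add_eq_sub, abs_sub_comm]
      exact hn x θ hx) (by linarith)
  simp only [zero_mul, zero_add, avg_const] at this
  rw [div_mul_cancel₀ _ hM.ne'] at this
  rw [Real.dist_eq]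
  linarith

/-- Central limit theorem for the total in a mean-field system. -/
theorem MeanField.tendsto_avg (h : MeanField w S Λ Λ' D C) (hΛ : Continuous Λ)
    (hΛ' : Continuous Λ') {p : ℝ} (hp : p ∈ Set.Ioo (0 : ℝ) 1)
    (hfix : Real.sigmoid (Λ p) = p) (huniq : ∀ q, Real.sigmoid (Λ q) = q → q = p)
    (hsub : p * (1 - p) * Λ' p < 1) {r : ℕ → ℝ} (hr : Tendsto r atTop atTop)
    (hrsq : ∀ᶠ n in atTop, (1 - p * (1 - p) * Λ' p) * r n ^ 2 =
      p * (1 - p) * Fintype.card (I n)) {ψ : ℝ → ℝ} (hψ : Continuous ψ) {M : ℝ}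
    (hM : ∀ x, |ψ x| ≤ M) :
    Tendsto (fun n => avg (w n) (S n) fun y => ψ (scaledTotal (w n) (S n) (r n) y)) atTop
      (𝓝 (∫ z, ψ z ∂(gaussianReal 0 1))) := by
  set μ : ℕ → ProbabilityMeasure ℝ := fun n =>
    ⟨gibbsLaw (w n) (S n) (scaledTotal (w n) (S n) (r n)), inferInstance⟩ with hμ
  set μ₀ : ProbabilityMeasure ℝ := ⟨gaussianReal 0 1, inferInstance⟩ with hμ₀
  have hlim : Tendsto μ atTop (𝓝 μ₀) := by
    refine ProbabilityMeasure.tendsto_of_tendsto_charFun fun t => ?_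
    change Tendsto (fun n => charFun (gibbsLaw (w n) (S n)
      (scaledTotal (w n) (S n) (r n))) t) atTop (𝓝 (charFun (gaussianReal 0 1) t))
    simp_rw [charFun_gibbsLaw]
    have h1 := h.tendsto_avg_cos hΛ hΛ' hp hfix huniq hsub hr hrsq t 0
    have h2 := h.tendsto_avg_cos hΛ hΛ' hp hfix huniq hsub hr hrsq t (Real.pi / 2)
    have h3 := ((Complex.continuous_ofReal.tendsto _).comp h1).sub
      (((Complex.continuous_ofReal.tendsto _).comp h2).mul_const Complex.I)
    have hval : charFun (gaussianReal 0 1) t =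
        ((Real.cos 0 * Real.exp (-(t ^ 2 / 2)) : ℝ) : ℂ) -
          ((Real.cos (Real.pi / 2) * Real.exp (-(t ^ 2 / 2)) : ℝ) : ℂ) * Complex.I := by
      rw [charFun_gaussianReal]
      simp
    rw [hval]
    exact h3
  rw [ProbabilityMeasure.tendsto_iff_forall_integral_tendsto] at hlim
  have h1 := hlim (BoundedContinuousFunction.ofNormedAddCommGroup ψ hψ M hM)
  simp only [hμ, hμ₀, BoundedContinuousFunction.coe_ofNormedAddCommGroup,
    ProbabilityMeasure.coe_mk, integral_gibbsLaw, smul_eq_mul] at h1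
  exact h1

end WeakLimit

section EdgeImages

lemma sym2Mk_injective {n : ℕ} :
    Function.Injective fun s : EdgeIdx n => s(s.1.1, s.1.2) := by
  rintro ⟨⟨a, b⟩, hab⟩ ⟨⟨c, d⟩, hcd⟩ h
  rcases Sym2.eq_iff.1 h with ⟨h1, h2⟩ | ⟨h1, h2⟩
  · exact Subtype.ext (Prod.ext h1 h2)
  · dsimp only at hab hcd h1 h2
    subst h1 h2
    exact absurd hab hcd.not_gt

lemma exists_edgeIdx {n : ℕ} {a b : Fin n} (hab : a ≠ b) :
    ∃ s : EdgeIdx n, s(s.1.1, s.1.2) = s(a, b) := by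
  rcases hab.lt_or_gt with h | h
  · exact ⟨⟨(a, b), h⟩, rfl⟩
  · exact ⟨⟨(b, a), h⟩, Sym2.eq_swap⟩

lemma yAdj_eq {n : ℕ} (y : EdgeIdx n → Bool) {a b : Fin n} {s : EdgeIdx n}
    (hs : s(s.1.1, s.1.2) = s(a, b)) : yAdj y a b = y s := by
  obtain ⟨⟨c, d⟩, hcd⟩ := s
  rcases Sym2.eq_iff.1 hs with ⟨h1, h2⟩ | ⟨h1, h2⟩ <;> dsimp only at hcd h1 h2 <;> subst h1 h2
  · simp [yAdj, hcd]
  · simp [yAdj, hcd, hcd.not_gt]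

open Classical in
/-- The edges of a graph on `Fin n`, as ordered pairs. -/
def edgeIdxFinset {n : ℕ} (G : SimpleGraph (Fin n)) : Finset (EdgeIdx n) :=
  univ.filter fun s => G.Adj s.1.1 s.1.2

lemma mem_edgeIdxFinset {n : ℕ} {G : SimpleGraph (Fin n)} {s : EdgeIdx n} :
    s ∈ edgeIdxFinset G ↔ G.Adj s.1.1 s.1.2 := by
  simp [edgeIdxFinset]

lemma mem_edgeIdxFinset_iff_mem_edgeSet {n : ℕ} {G : SimpleGraph (Fin n)} {s : EdgeIdx n} :
    s ∈ edgeIdxFinset G ↔ s(s.1.1, s.1.2) ∈ G.edgeSet := by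
  rw [mem_edgeIdxFinset, SimpleGraph.mem_edgeSet]

lemma card_edgeIdxFinset {n : ℕ} (G : SimpleGraph (Fin n)) :
    (edgeIdxFinset G).card = eCount G := by
  have himg : G.edgeSet =
      (fun s : EdgeIdx n => s(s.1.1, s.1.2)) '' (edgeIdxFinset G : Set (EdgeIdx n)) := by
    ext e
    induction e using Sym2.ind with
    | _ a b =>
      simp only [Set.mem_image, Finset.mem_coe, mem_edgeIdxFinset_iff_mem_edgeSet]
      constructor
      · intro h
        obtain ⟨s, hs⟩ := exists_edgeIdx (G.ne_of_adj h)
        exact ⟨s, hs ▸ h, hs⟩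
      · rintro ⟨s, hs, h⟩
        exact h ▸ hs
  rw [eCount, Nat.card_coe_set_eq, himg, Set.ncard_image_of_injective _ sym2Mk_injective,
    Set.ncard_coe_finset]

lemma card_edgeIdx (n : ℕ) : Fintype.card (EdgeIdx n) = n.choose 2 := by
  have h := card_edgeIdxFinset (⊤ : SimpleGraph (Fin n))
  have huniv : edgeIdxFinset (⊤ : SimpleGraph (Fin n)) = univ := by
    ext s
    simp [mem_edgeIdxFinset, s.2.ne]
  rw [huniv, Finset.card_univ, eCount, Nat.card_eq_fintype_card, ← SimpleGraph.edgeFinset_card,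
    SimpleGraph.card_edgeFinset_top_eq_card_choose_two, Fintype.card_fin] at h
  exact h

/-- The potential edges covered by the image of `H` under an embedding. -/
def edgeImage {V : Type} {n : ℕ} (H : SimpleGraph V) (φ : V ↪ Fin n) : Finset (EdgeIdx n) :=
  edgeIdxFinset (H.map φ)

variable {V : Type} {n : ℕ}

lemma mem_edgeImage {H : SimpleGraph V} {φ : V ↪ Fin n} {s : EdgeIdx n} :
    s ∈ edgeImage H φ ↔ ∃ a b, H.Adj a b ∧ φ a = s.1.1 ∧ φ b = s.1.2 := by
  rw [edgeImage, mem_edgeIdxFinset, SimpleGraph.map_adj]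

lemma card_edgeImage [Fintype V] (H : SimpleGraph V) (φ : V ↪ Fin n) :
    (edgeImage H φ).card = eCount H := by
  rw [edgeImage, card_edgeIdxFinset, eCount, eCount, SimpleGraph.edgeSet_map,
    Nat.card_coe_set_eq, Nat.card_coe_set_eq,
    Set.ncard_image_of_injective _ φ.sym2Map.injective]

lemma homCount_eq_sum [Fintype V] (H : SimpleGraph V) (y : EdgeIdx n → Bool) :
    (homCount H y : ℝ) = ∑ φ : V ↪ Fin n, mon (edgeImage H φ) y := by
  classical
  have hiff : ∀ φ : V ↪ Fin n, (∀ s ∈ edgeImage H φ, y s = true) ↔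
      ∀ a b, H.Adj a b → yAdj y (φ a) (φ b) = true := by
    intro φ
    constructor
    · intro h a b hab
      obtain ⟨s, hs⟩ := exists_edgeIdx (φ.injective.ne (H.ne_of_adj hab))
      rw [yAdj_eq y hs]
      refine h s ?_
      rw [edgeImage, mem_edgeIdxFinset_iff_mem_edgeSet, hs, SimpleGraph.mem_edgeSet]
      exact (SimpleGraph.map_adj _ _ _ _).2 ⟨a, b, hab, rfl, rfl⟩
    · intro h s hs
      obtain ⟨a, b, hab, ha, hb⟩ := mem_edgeImage.1 hs
      rw [← yAdj_eq y (s := s) (a := φ a) (b := φ b) (by rw [ha, hb])]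
      exact h a b hab
  simp_rw [mon_eq_ite, hiff]
  rw [Finset.sum_boole, ← Fintype.card_subtype, ← Nat.card_eq_fintype_card, homCount]
  congr 1
  exact Nat.card_congr
    { toFun := fun f => ⟨⟨f.1, f.2.1⟩, f.2.2⟩
      invFun := fun f => ⟨f.1, f.1.injective, f.2⟩
      left_inv := fun _ => rfl
      right_inv := fun _ => rfl }

/-- The number of embeddings of `H` covering the potential edge `s`. -/
def coverCount [Fintype V] [DecidableEq V] (H : SimpleGraph V) (s : EdgeIdx n) : ℕ :=
  (univ.filter fun φ : V ↪ Fin n => s ∈ edgeImage H φ).card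

lemma exists_perm_apply_eq {a b c d : Fin n} (hab : a ≠ b) (hcd : c ≠ d) :
    ∃ σ : Equiv.Perm (Fin n), σ a = c ∧ σ b = d := by
  refine ⟨(Equiv.swap a c).trans (Equiv.swap (Equiv.swap a c b) d), ?_, by simp⟩
  have h : c ≠ Equiv.swap a c b := by
    nth_rw 1 [← Equiv.swap_apply_left a c]
    exact (Equiv.injective _).ne hab
  rw [Equiv.trans_apply, Equiv.swap_apply_left, Equiv.swap_apply_of_ne_of_ne h hcd]

lemma coverCount_le [Fintype V] [DecidableEq V] (H : SimpleGraph V) (s t : EdgeIdx n) :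
    coverCount H s ≤ coverCount H t := by
  obtain ⟨σ, h1, h2⟩ := exists_perm_apply_eq s.2.ne t.2.ne
  refine Finset.card_le_card_of_injOn (fun φ => φ.trans σ.toEmbedding) ?_ ?_
  · intro φ hφ
    obtain ⟨a, b, hab, ha, hb⟩ := mem_edgeImage.1 (Finset.mem_filter.1 hφ).2
    refine Finset.mem_coe.2 (Finset.mem_filter.2 ⟨mem_univ _, mem_edgeImage.2 ⟨a, b, hab, ?_, ?_⟩⟩)
    · simp [ha, h1]
    · simp [hb, h2]
  · intro φ _ χ _ h
    refine DFunLike.ext _ _ fun a => ?_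
    simpa using DFunLike.congr_fun h a

lemma card_mul_coverCount [Fintype V] [DecidableEq V] (H : SimpleGraph V) (s : EdgeIdx n) :
    n.choose 2 * coverCount H s = eCount H * n.descFactorial (Fintype.card V) := by
  have h1 : ∑ t : EdgeIdx n, coverCount H t = n.choose 2 * coverCount H s := by
    rw [Finset.sum_congr rfl fun t _ => (coverCount_le H t s).antisymm (coverCount_le H s t),
      Finset.sum_const, Finset.card_univ, card_edgeIdx, smul_eq_mul]
  rw [← h1]
  simp_rw [coverCount, Finset.card_filter]
  rw [Finset.sum_comm]
  simp_rw [← Finset.card_filter, Finset.filter_univ_mem, card_edgeImage]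
  rw [Finset.sum_const, Finset.card_univ, Fintype.card_embedding_eq, Fintype.card_fin,
    smul_eq_mul, mul_comm]

lemma card_embedding_eqOn_mul_pow_le [Fintype V] [DecidableEq V] (T : Finset V) (g : V → Fin n) :
    (univ.filter fun φ : V ↪ Fin n => ∀ a ∈ T, φ a = g a).card * n ^ T.card ≤
      n ^ Fintype.card V := by
  have h : (univ.filter fun φ : V ↪ Fin n => ∀ a ∈ T, φ a = g a).card ≤
      (Fintype.piFinset fun a => if a ∈ T then {g a} else univ).card := by
    refine Finset.card_le_card_of_injOn (fun φ => φ) ?_ fun φ _ χ _ h => DFunLike.coe_injective h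
    intro φ hφ
    refine Finset.mem_coe.2 (Fintype.mem_piFinset.2 fun a => ?_)
    split_ifs with ha
    · exact Finset.mem_singleton.2 ((Finset.mem_filter.1 hφ).2 a ha)
    · exact mem_univ _
  refine (Nat.mul_le_mul_right _ h).trans_eq ?_
  rw [Fintype.card_piFinset]
  have : ∀ a, (if a ∈ T then ({g a} : Finset (Fin n)) else univ).card = if a ∈ T then 1 else n := by
    intro a
    split_ifs <;> simp
  simp_rw [this]
  rw [Finset.prod_ite, Finset.prod_const_one, one_mul, Finset.prod_const, ← pow_add]
  congr 1
  have := Finset.card_filter_add_card_filter_not (s := (univ : Finset V)) (fun a => a ∈ T)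
  rw [Finset.filter_univ_mem, Finset.card_univ] at this
  omega

lemma card_cover_pair_mul_le [Fintype V] [DecidableEq V] (H : SimpleGraph V) {s t : EdgeIdx n}
    (hst : s ≠ t) :
    (univ.filter fun φ : V ↪ Fin n => s ∈ edgeImage H φ ∧ t ∈ edgeImage H φ).card * n ^ 3 ≤
      Fintype.card V ^ 3 * n ^ Fintype.card V := by
  obtain ⟨x, hx, hx1, hx2⟩ : ∃ x, (x = t.1.1 ∨ x = t.1.2) ∧ x ≠ s.1.1 ∧ x ≠ s.1.2 := by
    by_contra! hcon
    have h1 := hcon t.1.1 (Or.inl rfl)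
    have h2 := hcon t.1.2 (Or.inr rfl)
    have hs := s.2
    have ht := t.2
    refine hst (Subtype.ext (Prod.ext ?_ ?_)) <;> grind
  have hsub : (univ.filter fun φ : V ↪ Fin n => s ∈ edgeImage H φ ∧ t ∈ edgeImage H φ) ⊆
      univ.biUnion fun q : V × V × V => univ.filter fun φ : V ↪ Fin n =>
        φ q.1 = s.1.1 ∧ φ q.2.1 = s.1.2 ∧ φ q.2.2 = x := by
    intro φ hφ
    obtain ⟨-, hs, ht⟩ := Finset.mem_filter.1 hφ
    obtain ⟨a, b, -, ha, hb⟩ := mem_edgeImage.1 hs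
    obtain ⟨c, d, -, hc, hd⟩ := mem_edgeImage.1 ht
    obtain ⟨e, he⟩ : ∃ e, φ e = x := by
      rcases hx with rfl | rfl
      exacts [⟨c, hc⟩, ⟨d, hd⟩]
    exact Finset.mem_biUnion.2 ⟨(a, b, e), mem_univ _,
      Finset.mem_filter.2 ⟨mem_univ _, ha, hb, he⟩⟩
  have hbound : ∀ q : V × V × V, (univ.filter fun φ : V ↪ Fin n =>
      φ q.1 = s.1.1 ∧ φ q.2.1 = s.1.2 ∧ φ q.2.2 = x).card * n ^ 3 ≤ n ^ Fintype.card V := by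
    rintro ⟨a, b, c⟩
    dsimp only
    rcases Finset.eq_empty_or_nonempty (univ.filter fun φ : V ↪ Fin n =>
      φ a = s.1.1 ∧ φ b = s.1.2 ∧ φ c = x) with h0 | ⟨φ, hφ⟩
    · rw [h0, Finset.card_empty, zero_mul]
      exact Nat.zero_le _
    · obtain ⟨-, ha, hb, hc⟩ := Finset.mem_filter.1 hφ
      have hab : a ≠ b := fun h => s.2.ne (by rw [← ha, ← hb, h])
      have hac : a ≠ c := fun h => hx1 (by rw [← ha, ← hc, h])
      have hbc : b ≠ c := fun h => hx2 (by rw [← hb, ← hc, h])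
      have h3 : ({a, b, c} : Finset V).card = 3 := Finset.card_eq_three.2
        ⟨a, b, c, hab, hac, hbc, rfl⟩
      have := card_embedding_eqOn_mul_pow_le {a, b, c} φ
      rw [h3] at this
      refine le_trans (Nat.mul_le_mul_right _ (Finset.card_le_card ?_)) this
      intro χ hχ
      obtain ⟨-, ha', hb', hc'⟩ := Finset.mem_filter.1 hχ
      refine Finset.mem_filter.2 ⟨mem_univ _, ?_⟩
      simp [ha, hb, hc, ha', hb', hc']
  calc _ ≤ (∑ q : V × V × V, (univ.filter fun φ : V ↪ Fin n =>
        φ q.1 = s.1.1 ∧ φ q.2.1 = s.1.2 ∧ φ q.2.2 = x).card) * n ^ 3 :=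
        Nat.mul_le_mul_right _ ((Finset.card_le_card hsub).trans Finset.card_biUnion_le)
    _ ≤ ∑ q : V × V × V, n ^ Fintype.card V := by
        rw [Finset.sum_mul]
        exact Finset.sum_le_sum fun q _ => hbound q
    _ = _ := by
        rw [Finset.sum_const, Finset.card_univ, Fintype.card_prod, Fintype.card_prod, smul_eq_mul]
        ring

end EdgeImages

section EdgeCount

open Filter Topology

/-- The expected number of embeddings of `H` into a large graph that cover a given edge, on the
scale `n ^ (v - 2)`. -/
lemma tendsto_cover_density (e v : ℕ) :
    Tendsto (fun n : ℕ => (n : ℝ) ^ ((2 : ℤ) - (v : ℤ)) * (e * n.descFactorial v / n.choose 2))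
      atTop (𝓝 (2 * e)) := by
  have h1 : Tendsto (fun n : ℕ => (n.descFactorial v : ℝ) / (n : ℝ) ^ v) atTop (𝓝 1) := by
    refine (Asymptotics.isEquivalent_iff_tendsto_one ?_).1 (isEquivalent_descFactorial v)
    filter_upwards [eventually_gt_atTop 0] with n hn
    positivity
  have h2 : Tendsto (fun n : ℕ => ((n.descFactorial 2 : ℝ) / (n : ℝ) ^ 2)⁻¹) atTop (𝓝 1⁻¹) := by
    refine Tendsto.inv₀ ((Asymptotics.isEquivalent_iff_tendsto_one ?_).1
      (isEquivalent_descFactorial 2)) one_ne_zero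
    filter_upwards [eventually_gt_atTop 0] with n hn
    positivity
  have h3 := (h1.mul h2).const_mul (2 * (e : ℝ))
  rw [inv_one, mul_one, mul_one] at h3
  refine h3.congr' ?_
  filter_upwards [eventually_gt_atTop 1] with n hn
  have hn0 : (n : ℝ) ≠ 0 := by positivity
  have hd : (n.descFactorial 2 : ℝ) = 2 * n.choose 2 := by
    rw [Nat.descFactorial_eq_factorial_mul_choose]
    norm_num
  have hc : (n.choose 2 : ℝ) ≠ 0 := by
    exact_mod_cast (Nat.choose_pos hn).ne'
  rw [hd, zpow_sub₀ hn0, zpow_natCast, zpow_ofNat]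
  field_simp

variable {k : ℕ} (β : Fin (k + 1) → ℝ) (v : Fin (k + 1) → ℕ)
  (H : ∀ j : Fin (k + 1), SimpleGraph (Fin (v j)))

/-- The weight of an embedded copy of one of the graphs `H j`. -/
def ergmCopyWeight (n : ℕ) (α : Σ j, Fin (v j) ↪ Fin n) : ℝ :=
  β α.1 * (n : ℝ) ^ ((2 : ℤ) - (v α.1 : ℤ))

/-- The edges of an embedded copy of one of the graphs `H j`. -/
def ergmCopyEdges (n : ℕ) (α : Σ j, Fin (v j) ↪ Fin n) : Finset (EdgeIdx n) :=
  edgeImage (H α.1) α.2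

lemma ergmWeight_eq (n : ℕ) (y : EdgeIdx n → Bool) :
    ergmWeight β v H n y =
      Real.exp (ham (ergmCopyWeight β v n) (ergmCopyEdges v H n) y) := by
  rw [ergmWeight, ham, Fintype.sum_sigma]
  congr 1
  refine Finset.sum_congr rfl fun j _ => ?_
  rw [homCount_eq_sum, Finset.mul_sum]
  rfl

lemma ergmProb_eq (n : ℕ) (y : EdgeIdx n → Bool) :
    ergmProb β v H n y = gibbs (ergmCopyWeight β v n) (ergmCopyEdges v H n) y := by
  simp_rw [ergmProb, ergmZ, ergmWeight_eq]
  rfl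

lemma ergmExp_eq (n : ℕ) (G : (EdgeIdx n → Bool) → ℝ) :
    ergmExp β v H n G = avg (ergmCopyWeight β v n) (ergmCopyEdges v H n) G := by
  simp_rw [ergmExp, ergmProb_eq]
  rfl

lemma sum_ergmCopy_mem (n : ℕ) (s : EdgeIdx n) (f : ℕ → ℝ) :
    (∑ α, if s ∈ ergmCopyEdges v H n α then
        ergmCopyWeight β v n α * f (ergmCopyEdges v H n α).card else 0) =
      ∑ j, β j * f (eCount (H j)) *
        ((n : ℝ) ^ ((2 : ℤ) - (v j : ℤ)) * (coverCount (H j) s : ℕ)) := by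
  rw [Fintype.sum_sigma]
  refine Finset.sum_congr rfl fun j _ => ?_
  simp only [ergmCopyEdges, ergmCopyWeight, card_edgeImage]
  rw [← Finset.sum_filter, Finset.sum_const, nsmul_eq_mul, coverCount]
  ring

lemma eventually_abs_sum_cover_sub_le (b : Fin (k + 1) → ℝ) {η : ℝ} (hη : 0 < η) :
    ∀ᶠ n : ℕ in atTop, ∀ s : EdgeIdx n,
      |(∑ j, b j * ((n : ℝ) ^ ((2 : ℤ) - (v j : ℤ)) * (coverCount (H j) s : ℕ))) -
        ∑ j, b j * (2 * eCount (H j))| ≤ η := by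
  have h : Tendsto (fun n : ℕ => ∑ j, b j * ((n : ℝ) ^ ((2 : ℤ) - (v j : ℤ)) *
      (eCount (H j) * n.descFactorial (v j) / n.choose 2))) atTop
      (𝓝 (∑ j, b j * (2 * eCount (H j)))) :=
    tendsto_finsetSum _ fun j _ => (tendsto_cover_density _ _).const_mul _
  filter_upwards [Metric.tendsto_nhds.1 h η hη, eventually_gt_atTop 1] with n hn hn1 s
  rw [Real.dist_eq] at hn
  refine le_trans (le_of_eq ?_) hn.le
  congr 2
  refine Finset.sum_congr rfl fun j _ => ?_
  have hc : (n.choose 2 : ℝ) ≠ 0 := by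
    exact_mod_cast (Nat.choose_pos hn1).ne'
  have := card_mul_coverCount (H j) s
  rw [Fintype.card_fin] at this
  congr 2
  rw [eq_div_iff hc, mul_comm]
  exact_mod_cast this

lemma mul_coupling_ergmCopy_le {n : ℕ} (hn : 0 < n) (s t : EdgeIdx n) :
    n * coupling (ergmCopyWeight β v n) (ergmCopyEdges v H n) s t ≤
      ∑ j, |β j| * (v j : ℝ) ^ 3 := by
  have hn0 : (0 : ℝ) < n := by exact_mod_cast hn
  rw [coupling, Fintype.sum_sigma, Finset.mul_sum]
  refine Finset.sum_le_sum fun j _ => ?_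
  rcases eq_or_ne s t with rfl | hst
  · simp only [Finset.notMem_erase, and_false, if_false, Finset.sum_const_zero, mul_zero]
    positivity
  simp only [ergmCopyEdges, ergmCopyWeight, Finset.mem_erase, hst.symm, ne_eq, not_false_eq_true,
    true_and]
  rw [← Finset.sum_filter, Finset.sum_const, nsmul_eq_mul]
  have h := card_cover_pair_mul_le (H j) hst
  rw [Fintype.card_fin] at h
  set c := (univ.filter fun φ : Fin (v j) ↪ Fin n =>
    s ∈ edgeImage (H j) φ ∧ t ∈ edgeImage (H j) φ).card
  have h' : (c : ℝ) * (n : ℝ) ^ 3 ≤ (v j : ℝ) ^ 3 * (n : ℝ) ^ v j := by exact_mod_cast h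
  have hz : (n : ℝ) * (c * (β j * (n : ℝ) ^ ((2 : ℤ) - (v j : ℤ)))) =
      β j * (c * (n : ℝ) ^ 3 / (n : ℝ) ^ v j) := by
    rw [zpow_sub₀ hn0.ne', zpow_natCast, zpow_ofNat]
    field_simp
  rw [hz]
  refine (mul_le_mul_of_nonneg_right (le_abs_self (β j)) (by positivity)).trans ?_
  exact mul_le_mul_of_nonneg_left ((div_le_iff₀ (by positivity)).2 h') (abs_nonneg _)

/-- The derivative of `PhiFn`, as a polynomial. -/
def phiSlope (q : ℝ) : ℝ :=
  ∑ j, β j * (eCount (H j) : ℝ) * ((eCount (H j) - 1 : ℕ) * q ^ (eCount (H j) - 2))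

lemma hasDerivAt_PhiFn (q : ℝ) : HasDerivAt (PhiFn β v H) (phiSlope β v H q) q := by
  unfold PhiFn phiSlope
  exact HasDerivAt.fun_sum fun j _ => (hasDerivAt_pow (eCount (H j) - 1) q).const_mul _

lemma phiFn_eq_sigmoid (q : ℝ) : phiFn β v H q = Real.sigmoid (2 * PhiFn β v H q) := by
  rw [phiFn, Real.sigmoid_def, Real.exp_neg]
  field_simp

lemma meanField_ergm (hβ : ∀ j : Fin (k + 1), j ≠ 0 → 0 < β j) (he0 : eCount (H 0) = 1) :
    MeanField (fun n => ergmCopyWeight β v n) (fun n => ergmCopyEdges v H n)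
      (fun q => 2 * PhiFn β v H q) (fun q => 2 * phiSlope β v H q)
      (∑ j, eCount (H j)) (∑ j, |β j| * (v j : ℝ) ^ 3) where
  ferro n := by
    rintro ⟨j, φ⟩
    rcases eq_or_ne j 0 with rfl | hj
    · exact Or.inr (Finset.card_eq_one.1 ((card_edgeImage (H 0) φ).trans he0))
    · exact Or.inl (mul_nonneg (hβ j hj).le (by positivity))
  card_le n α := (card_edgeImage _ _).trans_le
    (Finset.single_le_sum (f := fun j => eCount (H j)) (fun _ _ => Nat.zero_le _) (mem_univ α.1))
  card_index_le n := (card_edgeIdx n).trans_le (Nat.choose_le_pow n 2)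
  coupling_le := by
    filter_upwards [eventually_gt_atTop 0] with n hn s t
    exact mul_coupling_ergmCopy_le β v H hn s t
  mean q _ η hη := by
    filter_upwards [eventually_abs_sum_cover_sub_le v H
      (fun j => β j * q ^ (eCount (H j) - 1)) hη] with n hn s
    rw [sum_ergmCopy_mem β v H n s fun e => q ^ (e - 1), PhiFn, Finset.mul_sum]
    convert hn s using 3
    exact Finset.sum_congr rfl fun j _ => by ring
  mean' q _ η hη := by
    filter_upwards [eventually_abs_sum_cover_sub_le v H
      (fun j => β j * ((eCount (H j) - 1 : ℕ) * q ^ (eCount (H j) - 2))) hη] with n hn s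
    rw [sum_ergmCopy_mem β v H n s fun e => ((e - 1 : ℕ) : ℝ) * q ^ (e - 2), phiSlope,
      Finset.mul_sum]
    convert hn s using 3
    exact Finset.sum_congr rfl fun j _ => by ring

lemma Wn_eq (p : ℝ) (n : ℕ) :
    Wn β v H p n = scaledTotal (ergmCopyWeight β v n) (ergmCopyEdges v H n)
      (Real.sqrt (sigmaSq β v H p n)) := by
  funext y
  rw [Wn, muN, ergmExp_eq]
  rfl

lemma deriv_phiFn {p : ℝ} (hfix : phiFn β v H p = p) :
    deriv (phiFn β v H) p = p * (1 - p) * (2 * phiSlope β v H p) := by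
  have h : HasDerivAt (phiFn β v H) (p * (1 - p) * (2 * phiSlope β v H p)) p := by
    have h1 := (Real.hasDerivAt_sigmoid (2 * PhiFn β v H p)).comp p
      ((hasDerivAt_PhiFn β v H p).const_mul 2)
    rw [← phiFn_eq_sigmoid, hfix] at h1
    exact h1.congr_of_eventuallyEq (Eventually.of_forall fun q => phiFn_eq_sigmoid β v H q)
  exact h.deriv

end EdgeCount

/-- **CLT for the edge count of subcritical ERGMs**: the standardized number of edges `W_n`
converges in distribution, as `n → ∞`, to a standard normal random variable (stated via
convergence of expectations of bounded continuous test functions). -/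
theorem ergm_edge_count_clt {k : ℕ} (β : Fin (k + 1) → ℝ) (v : Fin (k + 1) → ℕ)
    (H : ∀ j : Fin (k + 1), SimpleGraph (Fin (v j)))
    -- `β₂, …, β_k > 0`
    (hβ : ∀ j : Fin (k + 1), j ≠ 0 → 0 < β j)
    -- `H₁` is a single edge
    (hv0 : v 0 = 2) (he0 : eCount (H 0) = 1)
    -- the graphs have no isolated vertices
    (hnoiso : ∀ (j : Fin (k + 1)) (a : Fin (v j)), ∃ b, (H j).Adj a b)
    -- `H₂, …, H_k` have at least two edges
    (hedges : ∀ j : Fin (k + 1), j ≠ 0 → 2 ≤ eCount (H j))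
    -- the subcritical region: unique fixed point `p ∈ (0,1)` with `φ_β'(p) < 1`
    (p : ℝ) (hp : p ∈ Set.Ioo (0 : ℝ) 1)
    (hfix : phiFn β v H p = p)
    (huniq : ∀ q ∈ Set.Ioo (0 : ℝ) 1, phiFn β v H q = q → q = p)
    (hsub : deriv (phiFn β v H) p < 1) :
    ∀ ψ : ℝ → ℝ, Continuous ψ → (∃ M : ℝ, ∀ t : ℝ, |ψ t| ≤ M) →
      Filter.Tendsto
        (fun n : ℕ => ∑ y : EdgeIdx n → Bool, ergmProb β v H n y * ψ (Wn β v H p n y))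
        Filter.atTop (nhds (∫ z, ψ z ∂(gaussianReal 0 1))) := by
  intro ψ hψ ⟨M, hM⟩
  have hsub' : p * (1 - p) * (2 * phiSlope β v H p) < 1 := deriv_phiFn β v H hfix ▸ hsub
  have hpos : 0 < 1 - p * (1 - p) * (2 * phiSlope β v H p) := sub_pos.2 hsub'
  have hp0 : 0 < p * (1 - p) := mul_pos hp.1 (sub_pos.2 hp.2)
  set c := p * (1 - p) / (1 - p * (1 - p) * (2 * phiSlope β v H p)) with hc
  have hc0 : 0 < c := div_pos hp0 hpos
  have hsigma : ∀ n, sigmaSq β v H p n = n * (n - 1) / 2 * c := by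
    intro n
    rw [sigmaSq, (hasDerivAt_PhiFn β v H p).deriv, hc]
    ring_nf
  have hcont : Continuous (PhiFn β v H) := by unfold PhiFn; fun_prop
  have hcont' : Continuous (phiSlope β v H) := by unfold phiSlope; fun_prop
  have hr : Filter.Tendsto (fun n : ℕ => Real.sqrt (sigmaSq β v H p n)) Filter.atTop
      Filter.atTop := by
    refine Real.tendsto_sqrt_atTop.comp ?_
    rw [funext hsigma]
    refine Filter.Tendsto.atTop_mul_const hc0 (Filter.Tendsto.atTop_div_const two_pos ?_)
    exact tendsto_natCast_atTop_atTop.atTop_mul_atTop₀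
      (Filter.tendsto_atTop_add_const_right _ (-1) tendsto_natCast_atTop_atTop)
  have hrsq : ∀ᶠ n : ℕ in Filter.atTop, (1 - p * (1 - p) * (2 * phiSlope β v H p)) *
      Real.sqrt (sigmaSq β v H p n) ^ 2 = p * (1 - p) * Fintype.card (EdgeIdx n) := by
    filter_upwards [Filter.eventually_gt_atTop 0] with n hn
    have hn1 : (1 : ℝ) ≤ n := by exact_mod_cast hn
    have h0 : 0 ≤ (n : ℝ) * (n - 1) := mul_nonneg (by positivity) (sub_nonneg.2 hn1)
    rw [hsigma, Real.sq_sqrt (by positivity), card_edgeIdx, Nat.cast_choose_two]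
    have hden : (1 - p * (1 - p) * (2 * phiSlope β v H p)) * c = p * (1 - p) :=
      mul_div_cancel₀ _ hpos.ne'
    linear_combination (n : ℝ) * (n - 1) / 2 * hden
  have huniq' : ∀ q, Real.sigmoid (2 * PhiFn β v H q) = q → q = p := by
    intro q hq
    refine huniq q ?_ ((phiFn_eq_sigmoid β v H q).trans hq)
    rw [← hq]
    exact ⟨Real.sigmoid_pos _, Real.sigmoid_lt_one _⟩
  have h := (meanField_ergm β v H hβ he0).tendsto_avg (hcont.const_mul 2) (hcont'.const_mul 2)
    hp ((phiFn_eq_sigmoid β v H p).symm.trans hfix) huniq' hsub' hr hrsq hψ hM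
  simp_rw [ergmProb_eq, Wn_eq]
  exact h
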